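/- Let (q,r) be a Strichartz pair, i.e. 2/q + 1/r = 1/2 with 4 ≤ q ≤ ∞. Then every solution u of the Airy equation with initial data u₀ satisfies ‖u‖_{L^q_t L^r_x(ℝ×ℝ)} ≲ ‖|D|^{-1/q} u₀‖_{L²(ℝ)}, where |D|^α is the Fourier multiplier with symbol |ξ|^α. -/

import Mathlib

open MeasureTheory Set Filter
open scoped ENNReal

noncomputable section

namespace KdVPaper

/-- Spatial Fourier transform, with the convention `f̂(ξ) = ∫ e^{-i x ξ} f(x) dx`,
so that the Airy propagator is the Fourier multiplier with symbol `e^{i t ξ³}`. -/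
def ftx (f : ℝ → ℂ) (ξ : ℝ) : ℂ :=
  ∫ x : ℝ, Complex.exp (-(Complex.I * ((x * ξ : ℝ) : ℂ))) * f x

/-- Inverse spatial Fourier transform. -/
def iftx (g : ℝ → ℂ) (x : ℝ) : ℂ :=
  (2 * Real.pi)⁻¹ • ∫ ξ : ℝ, Complex.exp (Complex.I * ((x * ξ : ℝ) : ℂ)) * g ξ

/-- Space-time Fourier transform `ũ(τ, ξ)`. -/
def ftxt (u : ℝ → ℝ → ℂ) (τ ξ : ℝ) : ℂ :=
  ∫ t : ℝ, Complex.exp (-(Complex.I * ((t * τ : ℝ) : ℂ))) * ftx (u t) ξ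

/-- Inverse space-time Fourier transform. -/
def iftxt (F : ℝ → ℝ → ℂ) (t x : ℝ) : ℂ :=
  (2 * Real.pi)⁻¹ • ∫ τ : ℝ, Complex.exp (Complex.I * ((t * τ : ℝ) : ℂ)) * iftx (F τ) x

/-- `L²` norm in the space variable. -/
def L2x (f : ℝ → ℂ) : ℝ≥0∞ := eLpNorm f 2 volume

/-- `L²` norm in space-time. -/
def L2xt (u : ℝ → ℝ → ℂ) : ℝ≥0∞ := eLpNorm (fun p : ℝ × ℝ => u p.1 p.2) 2 volume

/-- `L^p` norm in space-time, with the time variable restricted to a set `I`. -/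
def LpI (p : ℝ≥0∞) (I : Set ℝ) (u : ℝ → ℝ → ℂ) : ℝ≥0∞ :=
  eLpNorm (fun q : ℝ × ℝ => u q.1 q.2) p
    ((volume : Measure (ℝ × ℝ)).restrict (I ×ˢ (univ : Set ℝ)))

/-- `L²` norm in space-time, with the time variable restricted to a set `I`. -/
def L2I (I : Set ℝ) (u : ℝ → ℝ → ℂ) : ℝ≥0∞ := LpI 2 I u

/-- Mixed norm `L^q_t L^r_x`. -/
def LqtLrx (q r : ℝ≥0∞) (u : ℝ → ℝ → ℂ) : ℝ≥0∞ :=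
  eLpNorm (fun t => (eLpNorm (u t) r volume).toReal) q volume

/-- Mixed norm `L^r_x L^q_t`. -/
def LrxLqt (r q : ℝ≥0∞) (u : ℝ → ℝ → ℂ) : ℝ≥0∞ :=
  eLpNorm (fun x => (eLpNorm (fun t => u t x) q volume).toReal) r volume

/-- Sobolev norm `‖f‖_{H^s} = ‖(1+ξ²)^{s/2} f̂‖_{L²}`. -/
def HsNorm (s : ℝ) (f : ℝ → ℂ) : ℝ≥0∞ :=
  (∫⁻ ξ : ℝ, (‖ftx f ξ‖₊ : ℝ≥0∞) ^ 2 * ENNReal.ofReal ((1 + ξ ^ 2) ^ s)) ^ (1/2 : ℝ)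

/-- Sobolev norm of a real-valued function. -/
def HsNormR (s : ℝ) (f : ℝ → ℝ) : ℝ≥0∞ := HsNorm s (fun x => (f x : ℂ))

/-- The dyadic number `λ = 2^n ≥ 1`. -/
def dy (n : ℕ) : ℝ := 2 ^ n

/-- Dyadic annulus: all frequencies `≤ 1` are included in the first piece. -/
def ann (n : ℕ) : Set ℝ :=
  if n = 0 then {ξ : ℝ | |ξ| ≤ 1} else {ξ : ℝ | dy (n - 1) < |ξ| ∧ |ξ| ≤ dy n}

/-- A fattened annulus `{|ξ| ≈ 2^n}`. -/
def annAt (n : ℕ) : Set ℝ := {ξ : ℝ | dy n / 2 ≤ |ξ| ∧ |ξ| ≤ 2 * dy n}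

/-- Sharp Fourier projection onto a set of frequencies. -/
def PxSet (A : Set ℝ) (f : ℝ → ℂ) : ℝ → ℂ := iftx (A.indicator (ftx f))

/-- Littlewood–Paley projection `P_λ`, `λ = 2^n`. -/
def Px (n : ℕ) (f : ℝ → ℂ) : ℝ → ℂ := PxSet (ann n) f

/-- Littlewood–Paley projection acting on space-time functions. -/
def Pt (n : ℕ) (u : ℝ → ℝ → ℂ) : ℝ → ℝ → ℂ := fun t => Px n (u t)

/-- `f` has spatial Fourier support in `A`. -/
def suppIn (A : Set ℝ) (f : ℝ → ℂ) : Prop := ∀ ξ : ℝ, ξ ∉ A → ftx f ξ = 0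

/-- Modulation projection `Q_A`, restricting `τ - ξ³` to the set `A`. -/
def Qm (A : Set ℝ) (u : ℝ → ℝ → ℂ) : ℝ → ℝ → ℂ :=
  iftxt (fun τ ξ => A.indicator (fun _ => ftxt u τ ξ) (τ - ξ ^ 3))

/-- The linear (Airy) part of the KdV operator, `(∂_t + ∂³_x) u`. -/
def airyOp (u : ℝ → ℝ → ℂ) : ℝ → ℝ → ℂ :=
  fun t x => deriv (fun t' => u t' x) t + iteratedDeriv 3 (u t) x

/-- Sharp time cutoff `η_{[a,b]} u`. -/
def tcut (a b : ℝ) (u : ℝ → ℝ → ℂ) : ℝ → ℝ → ℂ :=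
  fun t x => (Icc a b).indicator (fun _ => u t x) t

/-- The `X^{0,1}[I]` norm on `I = [a,b]`:
`‖φ‖² = ‖φ(a)‖_{L²}² + |I| ‖(∂_t+∂³_x)φ‖²_{L²(I×ℝ)}`. -/
def X01Norm (a b : ℝ) (φ : ℝ → ℝ → ℂ) : ℝ≥0∞ :=
  ((eLpNorm (φ a) 2 volume) ^ 2
    + ENNReal.ofReal (b - a) * (L2I (Icc a b) (airyOp φ)) ^ 2) ^ (1/2 : ℝ)

/-- The `X¹[I]` norm: `‖φ‖² = Σ_λ λ^{2s} ‖P_λ φ‖²_{X^{0,1}[I]}`. -/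
def X1Norm (s a b : ℝ) (φ : ℝ → ℝ → ℂ) : ℝ≥0∞ :=
  (∑' n : ℕ, ENNReal.ofReal (dy n ^ (2 * s)) * (X01Norm a b (Pt n φ)) ^ 2) ^ (1/2 : ℝ)

/-- The `X¹[I]` norm of a single dyadic piece at frequency `2^n`:
`‖u_λ‖_{X¹[I]} = λ^s ‖u_λ‖_{X^{0,1}[I]}`. -/
def X1dyadic (s : ℝ) (n : ℕ) (a b : ℝ) (u : ℝ → ℝ → ℂ) : ℝ≥0∞ :=
  ENNReal.ofReal (dy n ^ s) * X01Norm a b u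

/-- The Bourgain norm `X^{α,β}` adapted to the curve `τ = c ξ³`. -/
def XabNorm (c α β : ℝ) (u : ℝ → ℝ → ℂ) : ℝ≥0∞ :=
  (∫⁻ τ : ℝ, ∫⁻ ξ : ℝ, (‖ftxt u τ ξ‖₊ : ℝ≥0∞) ^ 2
      * ENNReal.ofReal ((1 + ξ ^ 2) ^ α * (1 + (τ - c * ξ ^ 3) ^ 2) ^ β)) ^ (1/2 : ℝ)

/-- The length `λ^{4s+3}` of the small frequency-dependent time intervals. -/
def ilen (s : ℝ) (n : ℕ) : ℝ := dy n ^ (4 * s + 3)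

/-- The solution of the Airy equation `∂_t u + ∂³_x u = 0` with data `u₀`:
the Fourier multiplier with symbol `e^{i t ξ³}` applied to `u₀`. -/
def airySol (u₀ : ℝ → ℂ) : ℝ → ℝ → ℂ :=
  fun t => iftx (fun ξ => Complex.exp (Complex.I * ((t * ξ ^ 3 : ℝ) : ℂ)) * ftx u₀ ξ)

/-- The fractional derivative `|D|^α`, the Fourier multiplier with symbol `|ξ|^α`. -/
def absD (α : ℝ) (f : ℝ → ℂ) : ℝ → ℂ :=
  iftx (fun ξ => ((|ξ| ^ α : ℝ) : ℂ) * ftx f ξ)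

open scoped FourierTransform Topology NNReal

/-!
By van der Corput's method the kernel of `|D|^{1/2} e^{-t∂³}` is `O(|t|^{-1/2})`, uniformly in `x`.
Hence, for any measurable path `y`, `TT*` and the Hardy-Littlewood-Sobolev inequality in time bound
`t ↦ u(t, y(t))` in `L⁴` by `‖|D|^{-1/4} u₀‖_{L²}`; letting `y(t)` run through near-maximizers of
`|u(t, ·)|` gives the endpoint `L⁴_t L^∞_x`, the other endpoint being conservation of energy.

In between, interpolation gives the estimate for data on a single dyadic frequency shell. To sum
over shells, expand the square of the sum and estimate the product of two pieces by Hölder with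
exponents moved slightly in opposite directions: since the smoothing then differs from `1/q`, this
gains `2^{-δ|k-j|}` for the shells `k` and `j`, and Schur's test applies.
-/

/-! ### Plancherel's theorem on `L¹ ∩ L²` -/

section Plancherel

variable {V E : Type*} [NormedAddCommGroup V] [InnerProductSpace ℝ V] [FiniteDimensional ℝ V]
  [MeasurableSpace V] [BorelSpace V] [NormedAddCommGroup E]

lemma continuous_fourier [NormedSpace ℂ E] {h : V → E} (h1 : Integrable h) :
    Continuous (𝓕 h) :=
  VectorFourier.fourierIntegral_continuous Real.continuous_fourierChar continuous_inner h1

lemma integral_fourier_smul_eq [NormedSpace ℂ E] [CompleteSpace E] (G : SchwartzMap V ℂ)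
    {h : V → E} (h1 : Integrable h) :
    ∫ x, 𝓕 G x • h x = ∫ x, G x • 𝓕 h x := by
  have swap := VectorFourier.integral_fourierIntegral_smul_eq_flip (L := innerₗ V)
    Real.continuous_fourierChar continuous_inner (G.integrable (μ := volume)) h1
  rw [flip_innerₗ] at swap
  rw [SchwartzMap.fourier_coe]
  exact swap

variable [InnerProductSpace ℂ E] [CompleteSpace E]

/-- Both sides define the same tempered distribution. -/
lemma fourier_toLp_ae_eq {h : V → E} (h1 : Integrable h) (h2 : MemLp h 2) :
    (𝓕 (h2.toLp h) : Lp E 2 (volume : Measure V)) =ᵐ[volume] 𝓕 h := by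
  refine ae_eq_of_integral_contDiff_smul_eq ((Lp.memLp _).locallyIntegrable (by norm_num))
    (continuous_fourier h1).locallyIntegrable fun g g_smooth g_cpt ↦ ?_
  have hg₁ : HasCompactSupport (Complex.ofRealCLM ∘ g) := g_cpt.comp_left rfl
  have hg₂ : ContDiff ℝ (↑(⊤ : ℕ∞)) (Complex.ofRealCLM ∘ g) := by fun_prop
  let G : SchwartzMap V ℂ := hg₁.toSchwartzMap hg₂
  have hG (x : V) (v : E) : G x • v = g x • v := by simp [G]
  calc ∫ x, g x • (𝓕 (h2.toLp h) : Lp E 2 (volume : Measure V)) x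
      = Lp.toTemperedDistribution (𝓕 (h2.toLp h) : Lp E 2 (volume : Measure V)) G := by
        simp [hG]
    _ = ∫ x, 𝓕 G x • h2.toLp h x := by
        rw [← Lp.fourier_toTemperedDistribution_eq, TemperedDistribution.fourier_apply,
          Lp.toTemperedDistribution_apply]
    _ = ∫ x, 𝓕 G x • h x := by
        refine integral_congr_ae ?_
        filter_upwards [h2.coeFn_toLp] with x hx
        rw [hx]
    _ = ∫ x, g x • 𝓕 h x := by simp only [integral_fourier_smul_eq G h1, hG]

theorem eLpNorm_fourier {h : V → E} (h1 : Integrable h) (h2 : MemLp h 2) :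
    eLpNorm (𝓕 h) 2 volume = eLpNorm h 2 volume := by
  rw [← eLpNorm_congr_ae (fourier_toLp_ae_eq h1 h2), ← Lp.enorm_def,
    ← eLpNorm_congr_ae h2.coeFn_toLp, ← Lp.enorm_def, enorm_eq_iff_norm_eq, Lp.norm_fourier_eq]

end Plancherel

lemma ftx_eq_fourier (f : ℝ → ℂ) (ξ : ℝ) : ftx f ξ = 𝓕 f ((2 * Real.pi)⁻¹ * ξ) := by
  rw [ftx, Real.fourier_real_eq]
  refine integral_congr_ae (.of_forall fun x ↦ ?_)
  simp only [Circle.smul_def, Real.fourierChar_apply, smul_eq_mul]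
  congr 2
  push_cast
  field

lemma iftx_eq_fourier (h : ℝ → ℂ) (x : ℝ) :
    iftx h x = (2 * Real.pi)⁻¹ • 𝓕 h (-(2 * Real.pi)⁻¹ * x) := by
  rw [iftx, Real.fourier_real_eq]
  congr 1
  refine integral_congr_ae (.of_forall fun ξ ↦ ?_)
  simp only [Circle.smul_def, Real.fourierChar_apply, smul_eq_mul]
  congr 2
  push_cast
  field

lemma norm_ftx_le (f : ℝ → ℂ) (ξ : ℝ) : ‖ftx f ξ‖ ≤ ∫ x, ‖f x‖ := by
  rw [ftx_eq_fourier]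
  exact VectorFourier.norm_fourierIntegral_le_integral_norm ..

theorem eLpNorm_iftx {h : ℝ → ℂ} (h1 : Integrable h) (h2 : MemLp h 2) :
    eLpNorm (iftx h) 2 volume =
      ENNReal.ofReal ((2 * Real.pi) ^ (-(1 / 2) : ℝ)) * eLpNorm h 2 volume := by
  have hpi : (0 : ℝ) < 2 * Real.pi := by positivity
  have hne : -(2 * Real.pi)⁻¹ ≠ 0 := by simp [Real.pi_ne_zero]
  have hscale : iftx h = (2 * Real.pi)⁻¹ • (𝓕 h ∘ fun x ↦ -(2 * Real.pi)⁻¹ * x) :=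
    funext fun x ↦ iftx_eq_fourier h x
  rw [hscale, eLpNorm_const_smul, ← eLpNorm_map_measure
    (continuous_fourier h1).aestronglyMeasurable (by fun_prop), Real.map_volume_mul_left hne,
    eLpNorm_smul_measure_of_ne_top (by norm_num), eLpNorm_fourier h1 h2, smul_eq_mul, ← mul_assoc]
  congr 1
  rw [Real.enorm_eq_ofReal (by positivity), inv_neg, inv_inv, abs_neg, abs_of_pos hpi,
    ENNReal.ofReal_rpow_of_nonneg hpi.le (by simp), ← ENNReal.ofReal_mul (by positivity),
    ← Real.rpow_neg_one, ← Real.rpow_add hpi]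
  norm_num

/-! ### Oscillatory integrals -/

lemma norm_integral_le_sub_of_norm_le_deriv {E : Type*} [NormedAddCommGroup E] [NormedSpace ℝ E]
    {a b : ℝ} (hab : a ≤ b) {f : ℝ → E} {k k' : ℝ → ℝ} (hkc : ContinuousOn k (Icc a b))
    (hk : ∀ x ∈ Ioo a b, HasDerivAt k (k' x) x) (hle : ∀ x ∈ Ioo a b, ‖f x‖ ≤ k' x) :
    ‖∫ x in a..b, f x‖ ≤ k b - k a := by
  have hk' : IntervalIntegrable k' volume a b := by
    rw [intervalIntegrable_iff_integrableOn_Ioc_of_le hab]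
    exact intervalIntegral.integrableOn_deriv_of_nonneg hkc hk fun x hx ↦
      (norm_nonneg _).trans (hle x hx)
  rw [← intervalIntegral.integral_eq_sub_of_hasDerivAt_of_le hab hkc hk hk']
  refine intervalIntegral.norm_integral_le_of_norm_le hab ?_ hk'
  have hb : ∀ᵐ x, x ≠ b := by simp [ae_iff]
  filter_upwards [hb] with x hxb hx
  exact hle x ⟨hx.1, hx.2.lt_of_ne hxb⟩

lemma intervalIntegrable_of_hasDerivAt_of_norm_le {E : Type*} [NormedAddCommGroup E]
    [NormedSpace ℝ E] [CompleteSpace E] {a b : ℝ} (hab : a ≤ b) {g g' : ℝ → E} {k k' : ℝ → ℝ}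
    (hg : ∀ x ∈ Ioo a b, HasDerivAt g (g' x) x) (hkc : ContinuousOn k (Icc a b))
    (hk : ∀ x ∈ Ioo a b, HasDerivAt k (k' x) x) (hle : ∀ x ∈ Ioo a b, ‖g' x‖ ≤ k' x) :
    IntervalIntegrable g' volume a b := by
  rw [intervalIntegrable_iff_integrableOn_Ioo_of_le hab]
  have hk' : IntegrableOn k' (Ioc a b) :=
    intervalIntegral.integrableOn_deriv_of_nonneg hkc hk fun x hx ↦
      (norm_nonneg _).trans (hle x hx)
  have hmeas : AEStronglyMeasurable g' (volume.restrict (Ioo a b)) :=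
    (aestronglyMeasurable_deriv g _).congr <|
      (ae_restrict_mem measurableSet_Ioo).mono fun x hx ↦ (hg x hx).deriv
  exact (hk'.mono_set Ioo_subset_Ioc_self).mono' hmeas <|
    (ae_restrict_mem measurableSet_Ioo).mono hle

/-- Van der Corput's lemma: write the amplitude as `g * P'` and integrate `P' e^{iP}` by parts. -/
lemma norm_integral_oscillatory_le {a b : ℝ} (hab : a ≤ b) {ψ P P' g g' k k' : ℝ → ℝ}
    (hψc : ContinuousOn ψ (Icc a b)) (hPc : ContinuousOn P (Icc a b))
    (hgc : ContinuousOn g (Icc a b)) (hkc : ContinuousOn k (Icc a b))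
    (hP : ∀ x ∈ Ioo a b, HasDerivAt P (P' x) x) (hg : ∀ x ∈ Ioo a b, HasDerivAt g (g' x) x)
    (hk : ∀ x ∈ Ioo a b, HasDerivAt k (k' x) x) (hψ : ∀ x ∈ Ioo a b, ψ x = g x * P' x)
    (hle : ∀ x ∈ Ioo a b, |g' x| ≤ k' x) :
    ‖∫ x in a..b, (ψ x : ℂ) * Complex.exp (Complex.I * (P x : ℂ))‖
      ≤ |g a| + |g b| + (k b - k a) := by
  set e : ℝ → ℂ := fun x ↦ Complex.exp (Complex.I * (P x : ℂ)) with he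
  have norm_mul_e (c x : ℝ) : ‖(c : ℂ) * e x‖ = |c| := by
    simp only [he]
    rw [norm_mul, mul_comm Complex.I, Complex.norm_exp_ofReal_mul_I, mul_one, Complex.norm_real,
      Real.norm_eq_abs]
  have hec : ContinuousOn e (Icc a b) := by fun_prop
  have hψe : IntervalIntegrable (fun x ↦ Complex.I * (ψ x * e x)) volume a b :=
    ContinuousOn.intervalIntegrable_of_Icc hab (by fun_prop)
  have hg'e : IntervalIntegrable (fun x ↦ (g' x : ℂ) * e x) volume a b :=
    (intervalIntegrable_of_hasDerivAt_of_norm_le hab (fun x hx ↦ (hg x hx).ofReal_comp) hkc hk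
      fun x hx ↦ by simpa using hle x hx).mul_continuousOn (by rwa [uIcc_of_le hab])
  have hderiv (x) (hx : x ∈ Ioo a b) :
      HasDerivAt (fun y ↦ (g y : ℂ) * e y) (g' x * e x + Complex.I * (ψ x * e x)) x := by
    refine ((hg x hx).ofReal_comp.mul
      ((hP x hx).ofReal_comp.const_mul Complex.I).cexp).congr_deriv ?_
    simp only [hψ x hx, he]
    push_cast
    ring
  have by_parts := intervalIntegral.integral_eq_sub_of_hasDerivAt_of_le hab (by fun_prop) hderiv
    (hg'e.add hψe)
  rw [intervalIntegral.integral_add hg'e hψe, intervalIntegral.integral_const_mul] at by_parts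
  calc ‖∫ x in a..b, ψ x * e x‖ = ‖Complex.I * ∫ x in a..b, ψ x * e x‖ := by simp
    _ = ‖g b * e b - g a * e a - ∫ x in a..b, g' x * e x‖ := by rw [← by_parts]; ring_nf
    _ ≤ ‖g b * e b‖ + ‖g a * e a‖ + ‖∫ x in a..b, g' x * e x‖ :=
        (norm_sub_le _ _).trans (add_le_add_left (norm_sub_le _ _) _)
    _ ≤ |g a| + |g b| + (k b - k a) := by
        rw [norm_mul_e, norm_mul_e, add_comm |g b|]
        gcongr
        exact norm_integral_le_sub_of_norm_le_deriv hab hkc hk fun x hx ↦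
          (norm_mul_e _ _).trans_le (hle x hx)

/-- The normalised oscillatory integrand `√ξ e^{i(ξ³ + 3xξ)}` for the kernel of
`|D|^{1/2} e^{-t∂³}`. -/
def airyIntegrand (x ξ : ℝ) : ℂ :=
  (√ξ : ℂ) * Complex.exp (Complex.I * ((ξ ^ 3 + 3 * x * ξ : ℝ) : ℂ))

/-- The quotient of the amplitude `√ξ` and the derivative `3(ξ² + x)` of the phase. -/
def airyQuotient (x ξ : ℝ) : ℝ := √ξ / (3 * (ξ ^ 2 + x))

@[fun_prop]
lemma continuous_airyIntegrand (x : ℝ) : Continuous (airyIntegrand x) := by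
  unfold airyIntegrand
  fun_prop

lemma norm_airyIntegrand (x ξ : ℝ) : ‖airyIntegrand x ξ‖ = √ξ := by
  rw [airyIntegrand, norm_mul, mul_comm Complex.I, Complex.norm_exp_ofReal_mul_I, mul_one,
    Complex.norm_real, Real.norm_of_nonneg (Real.sqrt_nonneg ξ)]

lemma hasDerivAt_airyQuotient {x ξ : ℝ} (hξ : 0 < ξ) (hx : ξ ^ 2 + x ≠ 0) :
    HasDerivAt (airyQuotient x) ((x - 3 * ξ ^ 2) / (6 * √ξ * (ξ ^ 2 + x) ^ 2)) ξ := by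
  have hden : HasDerivAt (fun ξ : ℝ ↦ 3 * (ξ ^ 2 + x)) (3 * (2 * ξ)) ξ := by
    simpa using (((hasDerivAt_id ξ).pow 2).add_const x).const_mul 3
  refine ((Real.hasDerivAt_sqrt hξ.ne').div hden (by positivity)).congr_deriv ?_
  have hsq : √ξ ^ 2 = ξ := Real.sq_sqrt hξ.le
  have : √ξ ≠ 0 := (Real.sqrt_pos.2 hξ).ne'
  field_simp
  rw [hsq]
  ring

lemma norm_integral_airyIntegrand_le_of_phase_ne_zero {x a b : ℝ} {k k' : ℝ → ℝ} (ha : 0 ≤ a)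
    (hab : a ≤ b) (hx : ∀ ξ ∈ Icc a b, ξ ^ 2 + x ≠ 0) (hkc : ContinuousOn k (Icc a b))
    (hk : ∀ ξ ∈ Ioo a b, HasDerivAt k (k' ξ) ξ)
    (hle : ∀ ξ ∈ Ioo a b, |(x - 3 * ξ ^ 2) / (6 * √ξ * (ξ ^ 2 + x) ^ 2)| ≤ k' ξ) :
    ‖∫ ξ in a..b, airyIntegrand x ξ‖ ≤ |airyQuotient x a| + |airyQuotient x b| + (k b - k a) := by
  refine norm_integral_oscillatory_le (P' := fun ξ ↦ 3 * (ξ ^ 2 + x)) hab (by fun_prop)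
    (by fun_prop) (ContinuousOn.div (by fun_prop) (by fun_prop) fun ξ hξ ↦ ?_) hkc (fun ξ _ ↦ ?_)
    (fun ξ hξ ↦ hasDerivAt_airyQuotient (ha.trans_lt hξ.1) (hx ξ (Ioo_subset_Icc_self hξ))) hk
    (fun ξ hξ ↦ ?_) hle
  · simpa using hx ξ hξ
  · refine ((hasDerivAt_pow 3 ξ).add ((hasDerivAt_id ξ).const_mul (3 * x))).congr_deriv ?_
    push_cast
    ring
  · have := hx ξ (Ioo_subset_Icc_self hξ)
    rw [airyQuotient]
    field_simp

lemma norm_integral_airyIntegrand_le_sqrt_mul {a b : ℝ} (x : ℝ) (hab : a ≤ b) :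
    ‖∫ ξ in a..b, airyIntegrand x ξ‖ ≤ √b * (b - a) := by
  rw [← abs_of_nonneg (sub_nonneg.2 hab)]
  refine intervalIntegral.norm_integral_le_of_norm_le_const fun ξ hξ ↦ ?_
  rw [uIoc_of_le hab] at hξ
  rw [norm_airyIntegrand]
  exact Real.sqrt_le_sqrt hξ.2

/-- Away from the stationary point the quotient is monotone, so its variation is controlled by its
endpoint values. -/
lemma norm_integral_airyIntegrand_le_of_nonpos {x a b : ℝ} (hx : x ≤ 0) (ha : 0 ≤ a) (hab : a ≤ b)
    (hne : ∀ ξ ∈ Icc a b, ξ ^ 2 + x ≠ 0) :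
    ‖∫ ξ in a..b, airyIntegrand x ξ‖ ≤ 2 * (|airyQuotient x a| + |airyQuotient x b|) := by
  have hne' (ξ) (hξ : ξ ∈ Ioo a b) := hne ξ (Ioo_subset_Icc_self hξ)
  have hc : ContinuousOn (airyQuotient x) (Icc a b) := by
    unfold airyQuotient
    exact ContinuousOn.div (by fun_prop) (by fun_prop) fun ξ hξ ↦ by simpa using hne ξ hξ
  have h := norm_integral_airyIntegrand_le_of_phase_ne_zero ha hab hne hc.neg
    (fun ξ hξ ↦ (hasDerivAt_airyQuotient (ha.trans_lt hξ.1) (hne' ξ hξ)).neg) fun ξ _ ↦ by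
      rw [abs_of_nonpos (div_nonpos_of_nonpos_of_nonneg (by nlinarith) (by positivity))]
  have h1 := le_abs_self (airyQuotient x a)
  have h2 := neg_abs_le (airyQuotient x b)
  simp only [Pi.neg_apply] at h
  linarith

lemma norm_integral_airyIntegrand_one_le {x M : ℝ} (hx : 0 ≤ x) (hM : 1 ≤ M) :
    ‖∫ ξ in 1..M, airyIntegrand x ξ‖ ≤ 3 := by
  have quotient_le (ξ : ℝ) (hξ : 1 ≤ ξ) : |airyQuotient x ξ| ≤ 1 := by
    have : √ξ ≤ ξ := Real.sqrt_le_left (by linarith) |>.2 (by nlinarith)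
    rw [airyQuotient, abs_of_nonneg (by positivity), div_le_one (by positivity)]
    nlinarith
  have bound : ‖∫ ξ in 1..M, airyIntegrand x ξ‖ ≤ 1 + 1 + (-M⁻¹ - -1⁻¹) := by
    refine (norm_integral_airyIntegrand_le_of_phase_ne_zero (k := fun ξ ↦ -ξ⁻¹)
      (k' := fun ξ ↦ (ξ ^ 2)⁻¹) zero_le_one hM ?_ ?_ ?_ ?_).trans
      (by gcongr; exacts [quotient_le 1 le_rfl, quotient_le M hM])
    · intro ξ hξ
      have : 0 < ξ := by linarith [hξ.1]
      positivity
    · exact (continuousOn_inv₀.mono fun ξ (hξ : ξ ∈ Icc 1 M) ↦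
        (zero_lt_one.trans_le hξ.1).ne').neg
    · intro ξ hξ
      exact (hasDerivAt_inv (zero_lt_one.trans hξ.1).ne').neg.congr_deriv (neg_neg _)
    · intro ξ hξ
      have h1 : 1 ≤ ξ := hξ.1.le
      have hs : 1 ≤ √ξ := Real.one_le_sqrt.2 h1
      rw [abs_div, abs_of_nonneg (by positivity : 0 ≤ 6 * √ξ * (ξ ^ 2 + x) ^ 2),
        div_le_iff₀ (by positivity), inv_mul_eq_div, le_div_iff₀ (by positivity)]
      calc |x - 3 * ξ ^ 2| * ξ ^ 2 ≤ (6 * (ξ ^ 2 + x)) * (ξ ^ 2 + x) := by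
            gcongr
            · exact abs_le.2 ⟨by nlinarith, by nlinarith⟩
            · linarith
        _ ≤ 6 * √ξ * (ξ ^ 2 + x) ^ 2 := by nlinarith [sq_nonneg (ξ ^ 2 + x)]
  have hMinv : 0 ≤ M⁻¹ := by positivity
  linarith

lemma norm_integral_airyIntegrand_le_of_nonneg {x M : ℝ} (hx : 0 ≤ x) (hM : 0 ≤ M) :
    ‖∫ ξ in 0..M, airyIntegrand x ξ‖ ≤ 4 := by
  have low (b : ℝ) (hb : 0 ≤ b) (hb1 : b ≤ 1) : ‖∫ ξ in 0..b, airyIntegrand x ξ‖ ≤ 1 :=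
    (norm_integral_airyIntegrand_le_sqrt_mul x hb).trans <|
      mul_le_one₀ (Real.sqrt_le_one.2 hb1) (by linarith) (by linarith)
  obtain hM1 | hM1 := le_total M 1
  · linarith [low M hM hM1]
  rw [← intervalIntegral.integral_add_adjacent_intervals (b := 1)
    (Continuous.intervalIntegrable (by fun_prop) _ _)
    (Continuous.intervalIntegrable (by fun_prop) _ _)]
  linarith [norm_add_le (∫ ξ in 0..1, airyIntegrand x ξ) (∫ ξ in 1..M, airyIntegrand x ξ),
    low 1 zero_le_one le_rfl, norm_integral_airyIntegrand_one_le hx hM1]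

lemma abs_airyQuotient_le_one {x ξ : ℝ} (h : √ξ ≤ 3 * |ξ ^ 2 + x|) : |airyQuotient x ξ| ≤ 1 := by
  rw [airyQuotient, abs_div, abs_of_nonneg (Real.sqrt_nonneg ξ), abs_mul, abs_of_pos three_pos]
  exact div_le_one_of_le₀ h (by positivity)

lemma norm_integral_airyIntegrand_le_four {x a b : ℝ} (hx : x ≤ 0) (ha : 0 ≤ a) (hab : a ≤ b)
    (hne : ∀ ξ ∈ Icc a b, ξ ^ 2 + x ≠ 0) (hle : ∀ ξ ∈ Icc a b, √ξ ≤ 3 * |ξ ^ 2 + x|) :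
    ‖∫ ξ in a..b, airyIntegrand x ξ‖ ≤ 4 := by
  linarith [norm_integral_airyIntegrand_le_of_nonpos hx ha hab hne,
    abs_airyQuotient_le_one (hle a (left_mem_Icc.2 hab)),
    abs_airyQuotient_le_one (hle b (right_mem_Icc.2 hab))]

section StationaryPoint

variable {s d b : ℝ}

lemma norm_integral_airyIntegrand_left_of_stationary_le (hs : 0 ≤ s) (hd0 : 0 < d)
    (hd : d * (1 + s) = 1) (hb : 0 ≤ b) (hbs : b ≤ s ^ 2 - d) :
    ‖∫ ξ in 0..b, airyIntegrand (-s ^ 4) ξ‖ ≤ 4 := by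
  have hs2 : 1 ≤ 2 * s := by
    by_contra! h
    nlinarith [mul_le_mul_of_nonneg_right (hb.trans hbs) (by positivity : 0 ≤ 1 + s)]
  have gap (ξ : ℝ) (hξ : ξ ∈ Icc 0 b) : d * s ^ 2 ≤ s ^ 4 - ξ ^ 2 := by
    have h1 : d ≤ s ^ 2 - ξ := by linarith [hξ.2]
    nlinarith [mul_le_mul_of_nonneg_right h1 (by nlinarith [hξ.1] : 0 ≤ s ^ 2 + ξ),
      mul_nonneg hd0.le hξ.1]
  have hds : s ≤ 3 * (d * s ^ 2) := by nlinarith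
  refine norm_integral_airyIntegrand_le_four (by simp only [Left.neg_nonpos_iff]; positivity)
    le_rfl hb (fun ξ hξ ↦ ?_) fun ξ hξ ↦ ?_
  · nlinarith [gap ξ hξ]
  · have h1 : √ξ ≤ s := Real.sqrt_le_left hs |>.2 (by linarith [hξ.2])
    have h2 := neg_abs_le (ξ ^ 2 + -s ^ 4)
    linarith [gap ξ hξ]

lemma norm_integral_airyIntegrand_right_of_stationary_le (hs : 0 ≤ s) (hd0 : 0 < d)
    (hd : d * (1 + s) = 1) (hb : s ^ 2 + d ≤ b) :
    ‖∫ ξ in (s ^ 2 + d)..b, airyIntegrand (-s ^ 4) ξ‖ ≤ 4 := by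
  have large (ξ : ℝ) (hξ : ξ ∈ Icc (s ^ 2 + d) b) : 1 / 4 ≤ ξ := by
    have : 1 - s ≤ d := by nlinarith
    nlinarith [hξ.1, sq_nonneg (s - 1 / 2)]
  have gap (ξ : ℝ) (hξ : ξ ∈ Icc (s ^ 2 + d) b) : d * (ξ + s ^ 2) ≤ ξ ^ 2 - s ^ 4 := by
    nlinarith [mul_le_mul_of_nonneg_right (by linarith [hξ.1] : d ≤ ξ - s ^ 2)
      (by nlinarith [large ξ hξ] : 0 ≤ ξ + s ^ 2)]
  refine norm_integral_airyIntegrand_le_four (by simp only [Left.neg_nonpos_iff]; positivity)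
    (by positivity) hb (fun ξ hξ ↦ ?_) fun ξ hξ ↦ ?_
  · have : 0 < d * (ξ + s ^ 2) := mul_pos hd0 (by nlinarith [large ξ hξ])
    linarith [gap ξ hξ]
  · have hw : √ξ ^ 2 = ξ := Real.sq_sqrt (by linarith [large ξ hξ])
    have hw2 : 1 / 2 ≤ √ξ := Real.le_sqrt_of_sq_le (by linarith [large ξ hξ])
    have key : (1 + s) * √ξ ≤ 3 * (ξ + s ^ 2) := by nlinarith [sq_nonneg (√ξ - s)]
    calc √ξ = d * ((1 + s) * √ξ) := by rw [← mul_assoc, hd, one_mul]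
      _ ≤ d * (3 * (ξ + s ^ 2)) := by gcongr
      _ ≤ 3 * |ξ ^ 2 + -s ^ 4| := by linarith [gap ξ hξ, le_abs_self (ξ ^ 2 + -s ^ 4)]

lemma norm_integral_airyIntegrand_near_stationary_le (hs : 0 ≤ s) (hd0 : 0 < d)
    (hd : d * (1 + s) = 1) (hb : max 0 (s ^ 2 - d) ≤ b) (hbs : b ≤ s ^ 2 + d) :
    ‖∫ ξ in max 0 (s ^ 2 - d)..b, airyIntegrand (-s ^ 4) ξ‖ ≤ 2 := by
  have hsqrt : √b ≤ 1 + s :=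
    (Real.sqrt_le_left (by positivity)).2 (by nlinarith [mul_nonneg hd0.le hs])
  calc ‖∫ ξ in max 0 (s ^ 2 - d)..b, airyIntegrand (-s ^ 4) ξ‖
      ≤ √b * (b - max 0 (s ^ 2 - d)) := norm_integral_airyIntegrand_le_sqrt_mul _ hb
    _ ≤ (1 + s) * (2 * d) := by
        gcongr
        linarith [le_max_right 0 (s ^ 2 - d)]
    _ = 2 := by linear_combination 2 * hd

end StationaryPoint

/-- For `x = -s⁴` the stationary point is `s²`; the phase oscillates outside the window of radius
`(1 + s)⁻¹` around it, on which the trivial bound suffices. -/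
lemma norm_integral_airyIntegrand_neg_pow_four_le {s M : ℝ} (hs : 0 ≤ s) (hM : 0 ≤ M) :
    ‖∫ ξ in 0..M, airyIntegrand (-s ^ 4) ξ‖ ≤ 10 := by
  set d := (1 + s)⁻¹
  have hd0 : 0 < d := by positivity
  have hd : d * (1 + s) = 1 := inv_mul_cancel₀ (by positivity)
  have glue (a b c : ℝ) {A B : ℝ} (h₁ : ‖∫ ξ in a..b, airyIntegrand (-s ^ 4) ξ‖ ≤ A)
      (h₂ : ‖∫ ξ in b..c, airyIntegrand (-s ^ 4) ξ‖ ≤ B) :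
      ‖∫ ξ in a..c, airyIntegrand (-s ^ 4) ξ‖ ≤ A + B := by
    rw [← intervalIntegral.integral_add_adjacent_intervals (b := b)
      (Continuous.intervalIntegrable (by fun_prop) _ _)
      (Continuous.intervalIntegrable (by fun_prop) _ _)]
    exact norm_add_le_of_le h₁ h₂
  have left (b : ℝ) (hb : 0 ≤ b) (hbs : b ≤ max 0 (s ^ 2 - d)) :
      ‖∫ ξ in 0..b, airyIntegrand (-s ^ 4) ξ‖ ≤ 4 := by
    obtain hbs | hbs := le_max_iff.1 hbs
    · simp [hbs.antisymm hb]
    · exact norm_integral_airyIntegrand_left_of_stationary_le hs hd0 hd hb hbs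
  have middle (b : ℝ) (hbs : b ≤ s ^ 2 + d) (hb : max 0 (s ^ 2 - d) ≤ b) :
      ‖∫ ξ in 0..b, airyIntegrand (-s ^ 4) ξ‖ ≤ 4 + 2 :=
    glue _ _ _ (left _ (le_max_left _ _) le_rfl)
      (norm_integral_airyIntegrand_near_stationary_le hs hd0 hd hb hbs)
  obtain hM1 | hM1 := le_total M (max 0 (s ^ 2 - d))
  · linarith [left M hM hM1]
  obtain hM2 | hM2 := le_total M (s ^ 2 + d)
  · linarith [middle M hM2 hM1]
  · linarith [glue _ _ _ (middle _ le_rfl (max_le (by positivity) (by linarith)))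
      (norm_integral_airyIntegrand_right_of_stationary_le hs hd0 hd hM2)]

theorem norm_integral_airyIntegrand_le (x : ℝ) {M : ℝ} (hM : 0 ≤ M) :
    ‖∫ ξ in 0..M, airyIntegrand x ξ‖ ≤ 10 := by
  obtain hx | hx := le_total 0 x
  · linarith [norm_integral_airyIntegrand_le_of_nonneg hx hM]
  · have hroot : x = -((-x) ^ (1 / 4 : ℝ)) ^ 4 := by
      rw [← Real.rpow_mul_natCast (neg_nonneg.2 hx)]
      norm_num
    rw [hroot]
    exact norm_integral_airyIntegrand_neg_pow_four_le (Real.rpow_nonneg (neg_nonneg.2 hx) _) hM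

/-! ### The dispersive estimate -/

/-- The character `e^{i(tξ³ + xξ)}` of the Airy flow. -/
def airyPhase (t x ξ : ℝ) : ℂ := Complex.exp (Complex.I * ((t * ξ ^ 3 + x * ξ : ℝ) : ℂ))

lemma norm_airyPhase (t x ξ : ℝ) : ‖airyPhase t x ξ‖ = 1 := by
  rw [airyPhase, mul_comm]
  exact Complex.norm_exp_ofReal_mul_I _

lemma airyPhase_zero (ξ : ℝ) : airyPhase 0 0 ξ = 1 := by
  simp [airyPhase]

lemma conj_airyPhase (t x ξ : ℝ) : (starRingEnd ℂ) (airyPhase t x ξ) = airyPhase (-t) (-x) ξ := by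
  rw [airyPhase, airyPhase, ← Complex.exp_conj, map_mul, Complex.conj_I, Complex.conj_ofReal]
  congr 1
  push_cast
  ring

lemma airyPhase_neg (t x ξ : ℝ) : airyPhase t x (-ξ) = airyPhase (-t) (-x) ξ := by
  rw [airyPhase, airyPhase]
  ring_nf

lemma airyPhase_mul_airyPhase (t x s y ξ : ℝ) :
    airyPhase t x ξ * airyPhase s y ξ = airyPhase (t + s) (x + y) ξ := by
  simp only [airyPhase, ← Complex.exp_add]
  congr 1
  push_cast
  ring

lemma continuous_airyPhase : Continuous fun p : ℝ × ℝ × ℝ ↦ airyPhase p.1 p.2.1 p.2.2 := by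
  unfold airyPhase
  fun_prop

lemma sqrt_mul_airyPhase_cube {c ξ : ℝ} (hc : 0 < c) (hξ : 0 ≤ ξ) (x : ℝ) :
    (√c : ℂ) * ((√|ξ| : ℂ) * airyPhase (c ^ 3) x ξ) = airyIntegrand (x / (3 * c)) (c * ξ) := by
  rw [airyIntegrand, airyPhase, Real.sqrt_mul hc.le, abs_of_nonneg hξ, ← mul_assoc]
  have : (c : ℂ) ≠ 0 := Complex.ofReal_ne_zero.2 hc.ne'
  push_cast
  congr 3
  field

lemma norm_integral_airyPhase_half_line_le_of_pos {t M : ℝ} (ht : 0 < t) (x : ℝ) (hM : 0 ≤ M) :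
    ‖∫ ξ in 0..M, (√|ξ| : ℂ) * airyPhase t x ξ‖ ≤ 10 / √t := by
  obtain ⟨c, hc, rfl⟩ : ∃ c : ℝ, 0 < c ∧ c ^ 3 = t :=
    ⟨t ^ (1 / 3 : ℝ), by positivity, by rw [← Real.rpow_mul_natCast ht.le]; norm_num⟩
  have hsqrt : √(c ^ 3) = c * √c := by
    rw [pow_succ, Real.sqrt_mul (by positivity), Real.sqrt_sq hc.le]
  have scaling : (c * √c : ℂ) * ∫ ξ in 0..M, (√|ξ| : ℂ) * airyPhase (c ^ 3) x ξ
      = ∫ ξ in 0..c * M, airyIntegrand (x / (3 * c)) ξ := by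
    have := intervalIntegral.smul_integral_comp_mul_left (a := 0) (b := M)
      (airyIntegrand (x / (3 * c))) c
    rw [mul_zero] at this
    rw [← this, mul_assoc, ← intervalIntegral.integral_const_mul, Complex.real_smul]
    congr 1
    refine intervalIntegral.integral_congr fun ξ hξ ↦ ?_
    rw [uIcc_of_le hM] at hξ
    exact sqrt_mul_airyPhase_cube hc hξ.1 x
  have hnorm : ‖(c * √c : ℂ)‖ = c * √c := by
    rw [← Complex.ofReal_mul, Complex.norm_of_nonneg (by positivity)]
  rw [hsqrt, le_div_iff₀' (by positivity), ← hnorm, ← norm_mul, scaling]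
  exact norm_integral_airyIntegrand_le _ (by positivity)

lemma norm_integral_airyPhase_half_line_le (t x : ℝ) {M : ℝ} (ht : t ≠ 0) (hM : 0 ≤ M) :
    ‖∫ ξ in 0..M, (√|ξ| : ℂ) * airyPhase t x ξ‖ ≤ 10 / √|t| := by
  obtain h | h := ht.lt_or_gt
  · rw [abs_of_neg h, ← RCLike.norm_conj, intervalIntegral.integral_of_le hM, ← integral_conj,
      ← intervalIntegral.integral_of_le hM]
    simp only [map_mul, conj_airyPhase, Complex.conj_ofReal]
    exact norm_integral_airyPhase_half_line_le_of_pos (neg_pos.2 h) (-x) hM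
  · rw [abs_of_pos h]
    exact norm_integral_airyPhase_half_line_le_of_pos h x hM

theorem norm_integral_airyPhase_le {t M : ℝ} (ht : t ≠ 0) (x : ℝ) (hM : 0 ≤ M) :
    ‖∫ ξ in -M..M, (√|ξ| : ℂ) * airyPhase t x ξ‖ ≤ 20 / √|t| := by
  have hc : Continuous fun ξ : ℝ ↦ (√|ξ| : ℂ) * airyPhase t x ξ := by
    unfold airyPhase
    fun_prop
  have reflection : ∫ ξ in -M..0, (√|ξ| : ℂ) * airyPhase t x ξ
      = ∫ ξ in 0..M, (√|ξ| : ℂ) * airyPhase (-t) (-x) ξ := by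
    have := intervalIntegral.integral_comp_neg (a := 0) (b := M)
      fun ξ : ℝ ↦ (√|ξ| : ℂ) * airyPhase t x ξ
    simpa only [neg_zero, abs_neg, airyPhase_neg] using this.symm
  rw [← intervalIntegral.integral_add_adjacent_intervals (hc.intervalIntegrable _ 0)
    (hc.intervalIntegrable 0 _), reflection]
  have h := norm_add_le_of_le (norm_integral_airyPhase_half_line_le _ (-x) (neg_ne_zero.2 ht) hM)
    (norm_integral_airyPhase_half_line_le t x ht hM)
  rwa [abs_neg, ← add_div, (by norm_num : (10 + 10 : ℝ) = 20)] at h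

/-! ### The Hardy–Littlewood–Sobolev inequality on the line -/

section HardyLittlewoodSobolev

lemma lintegral_comp_abs (f : ℝ → ℝ≥0∞) : ∫⁻ x, f |x| = 2 * ∫⁻ x in Ioi 0, f x := by
  have right : ∫⁻ x in Ioi (0 : ℝ), f |x| = ∫⁻ x in Ioi 0, f x :=
    setLIntegral_congr_fun measurableSet_Ioi fun x hx ↦ by simp only [abs_of_pos (mem_Ioi.1 hx)]
  have left : ∫⁻ x in Iio (0 : ℝ), f |x| = ∫⁻ x in Ioi 0, f |x| := by
    have := (Measure.measurePreserving_neg (volume : Measure ℝ)).setLIntegral_comp_preimage_emb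
      (MeasurableEquiv.neg ℝ).measurableEmbedding (fun x ↦ f |x|) (Ioi 0)
    simpa only [abs_neg, neg_preimage, neg_Ioi, neg_zero] using this
  rw [← lintegral_add_compl _ (measurableSet_Iio (a := (0 : ℝ))), compl_Iio,
    setLIntegral_congr (Ioi_ae_eq_Ici (a := (0 : ℝ))).symm, left, right, two_mul]

lemma setLIntegral_enorm_sub_rpow (t γ : ℝ) {A : Set ℝ} (hA : MeasurableSet A) :
    ∫⁻ s in {s | |t - s| ∈ A}, ‖t - s‖ₑ ^ (-γ) =
      2 * ∫⁻ r in A ∩ Ioi 0, ENNReal.ofReal (r ^ (-γ)) := by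
  calc ∫⁻ s in {s | |t - s| ∈ A}, ‖t - s‖ₑ ^ (-γ)
      = ∫⁻ s, A.indicator (fun r ↦ ENNReal.ofReal r ^ (-γ)) |t - s| := by
        rw [← lintegral_indicator (by measurability)]
        refine lintegral_congr fun s ↦ ?_
        simp only [indicator, mem_ofPred_eq, Real.enorm_eq_ofReal_abs]
    _ = 2 * ∫⁻ r in Ioi 0, A.indicator (fun r ↦ ENNReal.ofReal r ^ (-γ)) r := by
        rw [lintegral_sub_left_eq_self fun s ↦ A.indicator (fun r ↦ ENNReal.ofReal r ^ (-γ)) |s|,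
          lintegral_comp_abs]
    _ = 2 * ∫⁻ r in A ∩ Ioi 0, ENNReal.ofReal (r ^ (-γ)) := by
        rw [lintegral_indicator hA, Measure.restrict_restrict hA]
        congr 1
        refine setLIntegral_congr_fun (hA.inter measurableSet_Ioi) fun r hr ↦ ?_
        exact ENNReal.ofReal_rpow_of_pos hr.2

lemma setLIntegral_enorm_sub_lt_rpow_le {γ ρ : ℝ} (hγ : γ < 1) (hρ : 0 < ρ) (t : ℝ) :
    ∫⁻ s in {s | |t - s| ∈ Iio ρ}, ‖t - s‖ₑ ^ (-γ) ≤
      ENNReal.ofReal (2 / (1 - γ)) * ENNReal.ofReal ρ ^ (1 - γ) := by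
  have hint : IntegrableOn (fun r : ℝ ↦ r ^ (-γ)) (Ioc 0 ρ) :=
    (intervalIntegrable_iff_integrableOn_Ioc_of_le hρ.le).1
      (intervalIntegral.intervalIntegrable_rpow' (by linarith))
  have hpos : 0 ≤ᵐ[volume.restrict (Ioc 0 ρ)] fun r : ℝ ↦ r ^ (-γ) :=
    (ae_restrict_mem measurableSet_Ioc).mono fun r hr ↦ Real.rpow_nonneg hr.1.le _
  have hle : ∫⁻ r in Iio ρ ∩ Ioi 0, ENNReal.ofReal (r ^ (-γ)) ≤
      ∫⁻ r in Ioc 0 ρ, ENNReal.ofReal (r ^ (-γ)) :=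
    lintegral_mono_set fun r hr ↦ ⟨hr.2, hr.1.le⟩
  rw [setLIntegral_enorm_sub_rpow t γ measurableSet_Iio]
  refine (mul_le_mul_right hle 2).trans_eq ?_
  rw [← ofReal_integral_eq_lintegral_ofReal hint hpos, ← intervalIntegral.integral_of_le hρ.le,
    integral_rpow (Or.inl (by linarith)), Real.zero_rpow (by linarith),
    ENNReal.ofReal_rpow_of_pos hρ, ← ENNReal.ofReal_ofNat, ← ENNReal.ofReal_mul (by norm_num),
    ← ENNReal.ofReal_mul (div_nonneg zero_le_two (by linarith))]
  ring_nf

lemma setLIntegral_le_enorm_sub_rpow {γ ρ : ℝ} (hγ : 1 < γ) (hρ : 0 < ρ) (t : ℝ) :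
    ∫⁻ s in {s | |t - s| ∈ Ici ρ}, ‖t - s‖ₑ ^ (-γ) =
      ENNReal.ofReal (2 / (γ - 1)) * ENNReal.ofReal ρ ^ (1 - γ) := by
  have hpos : 0 ≤ᵐ[volume.restrict (Ioi ρ)] fun r : ℝ ↦ r ^ (-γ) :=
    (ae_restrict_mem measurableSet_Ioi).mono fun r hr ↦ Real.rpow_nonneg (hρ.trans hr).le _
  rw [setLIntegral_enorm_sub_rpow t γ measurableSet_Ici,
    inter_eq_left.2 (Ici_subset_Ioi.2 hρ), setLIntegral_congr (Ioi_ae_eq_Ici (a := ρ)).symm,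
    ← ofReal_integral_eq_lintegral_ofReal (integrableOn_Ioi_rpow_of_lt (by linarith) hρ) hpos,
    integral_Ioi_rpow_of_lt (by linarith) hρ, ENNReal.ofReal_rpow_of_pos hρ,
    ← ENNReal.ofReal_ofNat, ← ENNReal.ofReal_mul (by norm_num),
    ← ENNReal.ofReal_mul (div_nonneg zero_le_two (by linarith))]
  congr 1
  have h1 : γ - 1 ≠ 0 := by linarith
  have h2 : -γ + 1 ≠ 0 := by linarith
  rw [(by ring : 1 - γ = -γ + 1)]
  field_simp
  ring

variable {γ p : ℝ} {F : ℝ → ℝ≥0∞}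

lemma setLIntegral_mul_enorm_sub_rpow_near_le (h1 : γ < 1) (hF : Measurable F) (t : ℝ) {ρ : ℝ}
    (hρ : 0 < ρ) :
    ∫⁻ s in {s | |t - s| ∈ Iio ρ} ∩ {s | F s ≤ F t}, F s * ‖t - s‖ₑ ^ (-γ) ≤
      F t * (ENNReal.ofReal (2 / (1 - γ)) * ENNReal.ofReal ρ ^ (1 - γ)) := by
  have hmeas : MeasurableSet {s : ℝ | |t - s| ∈ Iio ρ} := by measurability
  calc _ ≤ ∫⁻ s in {s | |t - s| ∈ Iio ρ} ∩ {s | F s ≤ F t}, F t * ‖t - s‖ₑ ^ (-γ) :=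
        setLIntegral_mono' (hmeas.inter (measurableSet_le hF measurable_const))
          fun s hs ↦ by gcongr; exact hs.2
    _ ≤ ∫⁻ s in {s | |t - s| ∈ Iio ρ}, F t * ‖t - s‖ₑ ^ (-γ) :=
        lintegral_mono_set inter_subset_left
    _ ≤ _ := by
        rw [lintegral_const_mul _ (by fun_prop)]
        gcongr
        exact setLIntegral_enorm_sub_lt_rpow_le h1 hρ t

lemma setLIntegral_mul_enorm_sub_rpow_far_le (h0 : 0 < γ) (hp : p.HolderConjugate (2 / γ))
    (hF : Measurable F) (t : ℝ) {ρ : ℝ} (hρ : 0 < ρ) :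
    ∫⁻ s in {s | |t - s| ∈ Ici ρ}, F s * ‖t - s‖ₑ ^ (-γ) ≤
      (∫⁻ s, F s ^ p) ^ (1 / p) * (2 * ENNReal.ofReal ρ ^ (-1 : ℝ)) ^ (γ / 2) := by
  have tail : ∫⁻ s in {s | |t - s| ∈ Ici ρ}, (‖t - s‖ₑ ^ (-γ)) ^ (2 / γ) =
      2 * ENNReal.ofReal ρ ^ (-1 : ℝ) := by
    have hexp : -γ * (2 / γ) = -2 := by field_simp
    have := setLIntegral_le_enorm_sub_rpow one_lt_two hρ t
    norm_num only [ENNReal.ofReal_ofNat] at this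
    simp only [← ENNReal.rpow_mul, hexp, this]
  rw [← tail, ← one_div_div 2 γ]
  refine (ENNReal.lintegral_mul_le_Lp_mul_Lq _ hp hF.aemeasurable (by fun_prop)).trans ?_
  gcongr
  · exact one_div_nonneg.2 hp.nonneg
  · exact Measure.restrict_le_self

lemma mul_radius_rpow_near_eq {N f : ℝ≥0∞} (hγ : γ ≤ 1) (hp : p * (2 - γ) = 2) (hf0 : f ≠ 0)
    (hf : f ≠ ⊤) :
    f * (N * f ^ (-p)) ^ (1 - γ) = N ^ (1 - γ) * f ^ (p - 1) := by
  calc _ = N ^ (1 - γ) * (f ^ (1 : ℝ) * f ^ (-p * (1 - γ))) := by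
        rw [ENNReal.mul_rpow_of_nonneg _ _ (by linarith), ← ENNReal.rpow_mul, ENNReal.rpow_one]
        ring
    _ = _ := by
        rw [← ENNReal.rpow_add _ _ hf0 hf]
        congr 2
        linarith

lemma mul_radius_rpow_far_eq {N f : ℝ≥0∞} (hγ : 0 ≤ γ) (hp : p * (2 - γ) = 2) (hN0 : N ≠ 0)
    (hN : N ≠ ⊤) (hf0 : f ≠ 0) (hf : f ≠ ⊤) :
    N ^ (1 - γ / 2) * (2 * (N * f ^ (-p)) ^ (-1 : ℝ)) ^ (γ / 2) =
      2 ^ (γ / 2) * (N ^ (1 - γ) * f ^ (p - 1)) := by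
  calc _ = 2 ^ (γ / 2) * (N ^ (1 - γ / 2) * N ^ (-(γ / 2)) * f ^ (p * (γ / 2))) := by
        rw [ENNReal.mul_rpow_of_ne_zero hN0 (by simp [hf0, hf]), ← ENNReal.rpow_mul,
          ENNReal.mul_rpow_of_nonneg _ _ (by positivity),
          ENNReal.mul_rpow_of_nonneg _ _ (by positivity), ← ENNReal.rpow_mul, ← ENNReal.rpow_mul]
        ring_nf
    _ = _ := by
        rw [← ENNReal.rpow_add _ _ hN0 hN]
        congr 3 <;> linarith

/-- The radius `‖F‖_p^p / (F t)^p` balances the contributions from near and far. -/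
lemma setLIntegral_mul_enorm_sub_rpow_le (h0 : 0 < γ) (h1 : γ < 1) (hp : p = 2 / (2 - γ))
    (hF : Measurable F) (hN0 : ∫⁻ s, F s ^ p ≠ 0) (hN : ∫⁻ s, F s ^ p ≠ ⊤) {t : ℝ} (ht0 : F t ≠ 0)
    (ht : F t ≠ ⊤) :
    ∫⁻ s in {s | F s ≤ F t}, F s * ‖t - s‖ₑ ^ (-γ) ≤
      (ENNReal.ofReal (2 / (1 - γ)) + 2 ^ (γ / 2)) * (∫⁻ s, F s ^ p) ^ (1 - γ) * F t ^ (p - 1) := by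
  set N := ∫⁻ s, F s ^ p
  set K := ENNReal.ofReal (2 / (1 - γ))
  have hp2 : p * (2 - γ) = 2 := by rw [hp]; exact div_mul_cancel₀ 2 (by linarith)
  have hinv : 1 / p = 1 - γ / 2 := by rw [hp]; field_simp
  have hconj : p.HolderConjugate (2 / γ) := by
    rw [Real.holderConjugate_iff, inv_div, ← one_div, hinv]
    exact ⟨by nlinarith, by ring⟩
  obtain ⟨ρ, hρ0, hρ⟩ : ∃ ρ : ℝ, 0 < ρ ∧ ENNReal.ofReal ρ = N * F t ^ (-p) := by
    have hne : N * F t ^ (-p) ≠ ⊤ := by finiteness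
    exact ⟨_, ENNReal.toReal_pos (by simp [hN0, ht0, ht]) hne, ENNReal.ofReal_toReal hne⟩
  have hmeas : MeasurableSet {s : ℝ | |t - s| ∈ Iio ρ} := by measurability
  have hcompl : {s : ℝ | |t - s| ∈ Iio ρ}ᶜ = {s | |t - s| ∈ Ici ρ} := by ext; simp
  calc _ = (∫⁻ s in {s | |t - s| ∈ Iio ρ} ∩ {s | F s ≤ F t}, F s * ‖t - s‖ₑ ^ (-γ)) +
        ∫⁻ s in {s | |t - s| ∈ Ici ρ} ∩ {s | F s ≤ F t}, F s * ‖t - s‖ₑ ^ (-γ) := by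
        rw [← lintegral_add_compl _ hmeas, Measure.restrict_restrict hmeas,
          Measure.restrict_restrict hmeas.compl, hcompl]
    _ ≤ K * (N ^ (1 - γ) * F t ^ (p - 1)) + 2 ^ (γ / 2) * (N ^ (1 - γ) * F t ^ (p - 1)) := by
        rw [← mul_radius_rpow_far_eq h0.le hp2 hN0 hN ht0 ht,
          ← mul_radius_rpow_near_eq h1.le hp2 ht0 ht, mul_left_comm K, ← hρ, ← hinv]
        exact add_le_add (setLIntegral_mul_enorm_sub_rpow_near_le h1 hF t hρ0)
          ((lintegral_mono_set inter_subset_left).trans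
            (setLIntegral_mul_enorm_sub_rpow_far_le h0 hconj hF t hρ0))
    _ = _ := by ring

lemma lintegral_lintegral_le_two_mul_of_symm {α : Type*} [MeasurableSpace α] {μ : Measure α}
    [SFinite μ] {G : α → α → ℝ≥0∞} (hG : Measurable (Function.uncurry G))
    (symm : ∀ t s, G t s = G s t) {f : α → ℝ≥0∞} (hf : Measurable f) :
    ∫⁻ t, ∫⁻ s, G t s ∂μ ∂μ ≤ 2 * ∫⁻ t, ∫⁻ s in {s | f s ≤ f t}, G t s ∂μ ∂μ := by
  have hA (t : α) : MeasurableSet {s | f s ≤ f t} := measurableSet_le hf measurable_const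
  have hB (t : α) : MeasurableSet {s | f t ≤ f s} := measurableSet_le measurable_const hf
  have hGA : Measurable (Function.uncurry fun t ↦ {s | f s ≤ f t}.indicator (G t)) :=
    Measurable.ite (measurableSet_le (hf.comp measurable_snd) (hf.comp measurable_fst)) hG
      measurable_const
  have swap : ∫⁻ t, ∫⁻ s in {s | f t ≤ f s}, G t s ∂μ ∂μ =
      ∫⁻ t, ∫⁻ s in {s | f s ≤ f t}, G t s ∂μ ∂μ := by
    simp only [← lintegral_indicator, hA, hB]
    refine Eq.trans ?_ (lintegral_lintegral_swap hGA.aemeasurable).symm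
    exact lintegral_congr fun t ↦ lintegral_congr fun s ↦ by
      simp only [indicator, mem_ofPred_eq, symm t s]; congr
  have cover (t : α) : {s | f s ≤ f t} ∪ {s | f t ≤ f s} = univ :=
    eq_univ_of_forall fun s ↦ le_total (f s) (f t)
  calc _ ≤ ∫⁻ t, ((∫⁻ s in {s | f s ≤ f t}, G t s ∂μ) + ∫⁻ s in {s | f t ≤ f s}, G t s ∂μ) ∂μ := by
        refine lintegral_mono fun t ↦ ?_
        rw [← setLIntegral_univ, ← cover t]
        exact lintegral_union_le _ _ _
    _ = _ := by
        rw [lintegral_add_left, swap, two_mul]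
        simp only [← lintegral_indicator, hA]
        exact hGA.lintegral_prod_right'

theorem lintegral_lintegral_mul_enorm_sub_rpow_le (h0 : 0 < γ) (h1 : γ < 1)
    (hp : p = 2 / (2 - γ)) (hF : Measurable F) (hfin : ∀ t, F t ≠ ⊤) :
    ∫⁻ t, ∫⁻ s, F t * F s * ‖t - s‖ₑ ^ (-γ) ≤
      2 * (ENNReal.ofReal (2 / (1 - γ)) + 2 ^ (γ / 2)) * (∫⁻ s, F s ^ p) ^ (2 - γ) := by
  set N := ∫⁻ s, F s ^ p
  set K := ENNReal.ofReal (2 / (1 - γ)) + 2 ^ (γ / 2)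
  have hp0 : 0 < p := by rw [hp]; exact div_pos two_pos (by linarith)
  have hmeas : Measurable fun z : ℝ × ℝ ↦ F z.1 * F z.2 * ‖z.1 - z.2‖ₑ ^ (-γ) := by fun_prop
  rcases eq_or_ne N ⊤ with hN | hN
  · have hK : 2 * K ≠ 0 := by simp [K]
    rw [hN, ENNReal.top_rpow_of_pos (by linarith), ENNReal.mul_top hK]
    exact le_top
  rcases eq_or_ne N 0 with hN0 | hN0
  · have hF0 : F =ᵐ[volume] 0 := by
      filter_upwards [(lintegral_eq_zero_iff (by fun_prop)).1 hN0] with s hs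
      simpa [hp0, hp0.not_gt] using hs
    have : ∫⁻ t, ∫⁻ s, F t * F s * ‖t - s‖ₑ ^ (-γ) = 0 :=
      (lintegral_congr_ae (hF0.mono fun t ht ↦ by simp [ht])).trans lintegral_zero
    exact this.trans_le zero_le
  have half : ∫⁻ t, ∫⁻ s in {s | F s ≤ F t}, F t * F s * ‖t - s‖ₑ ^ (-γ) ≤ K * N ^ (2 - γ) := by
    have pointwise (t : ℝ) : ∫⁻ s in {s | F s ≤ F t}, F t * F s * ‖t - s‖ₑ ^ (-γ) ≤
        K * N ^ (1 - γ) * F t ^ p := by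
      rcases eq_or_ne (F t) 0 with ht | ht
      · simp [ht]
      simp only [mul_assoc (F t)]
      rw [lintegral_const_mul _ (by fun_prop)]
      refine (mul_le_mul_right
        (setLIntegral_mul_enorm_sub_rpow_le h0 h1 hp hF hN0 hN ht (hfin t)) _).trans_eq ?_
      nth_rw 1 [← ENNReal.rpow_one (F t)]
      rw [mul_left_comm, ← ENNReal.rpow_add _ _ ht (hfin t), add_sub_cancel]
    refine (lintegral_mono pointwise).trans_eq ?_
    have hexp : 2 - γ = 1 - γ + 1 := by ring
    rw [lintegral_const_mul _ (by fun_prop), mul_assoc, hexp, ENNReal.rpow_add _ _ hN0 hN,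
      ENNReal.rpow_one]
  calc _ ≤ 2 * ∫⁻ t, ∫⁻ s in {s | F s ≤ F t}, F t * F s * ‖t - s‖ₑ ^ (-γ) :=
        lintegral_lintegral_le_two_mul_of_symm hmeas
          (fun t s ↦ by rw [mul_comm (F t), ← neg_sub, enorm_neg]) hF
    _ ≤ 2 * K * N ^ (2 - γ) := by rw [mul_assoc]; gcongr

end HardyLittlewoodSobolev

/-! ### Duality and the `TT*` method -/

section Duality

variable {α : Type*} [MeasurableSpace α] {μ : Measure α} {p q : ℝ} {A : ℝ≥0∞} {v : α → ℂ}

lemma le_rpow_of_le_mul_rpow (hpq : p.HolderConjugate q) {X : ℝ≥0∞} (hX : X ≠ ⊤)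
    (h : X ≤ A * X ^ (1 / p)) : X ≤ A ^ q := by
  rcases eq_or_ne X 0 with hX0 | hX0
  · simp [hX0]
  have hroot : X ^ (1 / q) ≤ A := by
    have hne : X ^ (1 / p) ≠ 0 := by simp [hX0, hX]
    have htop : X ^ (1 / p) ≠ ⊤ := by simp [hX0, hX]
    rwa [← ENNReal.mul_le_mul_iff_left hne htop, ← ENNReal.rpow_add _ _ hX0 hX, one_div, one_div,
      hpq.symm.inv_add_inv_eq_one,
      ENNReal.rpow_one, ← one_div]
  calc X = (X ^ (1 / q)) ^ q := by
        rw [← ENNReal.rpow_mul, one_div_mul_cancel hpq.symm.ne_zero, ENNReal.rpow_one]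
    _ ≤ A ^ q := ENNReal.rpow_le_rpow hroot hpq.symm.nonneg

lemma norm_rpow_mul_conj_mul_self (hq : 1 < q) (z : ℂ) :
    ((‖z‖ ^ (q - 2) : ℝ) : ℂ) * (starRingEnd ℂ) z * z = ((‖z‖ ^ q : ℝ) : ℂ) := by
  rcases eq_or_ne z 0 with rfl | hz
  · simp [(zero_lt_one.trans hq).ne']
  rw [mul_assoc, mul_comm _ z, Complex.mul_conj, Complex.normSq_eq_norm_sq, ← Complex.ofReal_mul,
    ← Real.rpow_natCast, ← Real.rpow_add (norm_pos_iff.2 hz)]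
  norm_num

lemma enorm_norm_rpow_mul_conj (hq : 1 < q) (z : ℂ) :
    ‖((‖z‖ ^ (q - 2) : ℝ) : ℂ) * (starRingEnd ℂ) z‖ₑ = ‖z‖ₑ ^ (q - 1) := by
  rcases eq_or_ne z 0 with rfl | hz
  · simp [hq]
  have hexp : q - 1 = q - 2 + 1 := by ring
  rw [enorm_mul, RCLike.enorm_conj, ← ofReal_norm, ← ofReal_norm, Complex.norm_real,
    Real.norm_of_nonneg (by positivity), ← ENNReal.ofReal_rpow_of_pos (norm_pos_iff.2 hz), hexp,
    ENNReal.rpow_add _ _ (by simpa using hz) ENNReal.ofReal_ne_top, ENNReal.rpow_one]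

lemma setLIntegral_enorm_rpow_ne_top {E : Type*} [NormedAddCommGroup E] {f : α → E} (hq : 0 ≤ q)
    {S : Set α} (hμS : μ S ≠ ⊤) {M : ℝ} (hM : ∀ x ∈ S, ‖f x‖ ≤ M) :
    ∫⁻ x in S, ‖f x‖ₑ ^ q ∂μ ≠ ⊤ := by
  refine ne_top_of_le_ne_top (b := ∫⁻ _ in S, ENNReal.ofReal M ^ q ∂μ) ?_ ?_
  · rw [setLIntegral_const]
    finiteness
  · refine setLIntegral_mono measurable_const fun x hx ↦ ?_
    gcongr
    rw [← ofReal_norm]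
    exact ENNReal.ofReal_le_ofReal (hM x hx)

lemma setLIntegral_enorm_rpow_le_of_pairing_le (hpq : p.HolderConjugate q) (hv : Measurable v)
    (h : ∀ F : α → ℂ, Measurable F → Integrable F μ →
      ‖∫ x, F x * v x ∂μ‖ₑ ≤ A * (∫⁻ x, ‖F x‖ₑ ^ p ∂μ) ^ (1 / p))
    {S : Set α} (hS : MeasurableSet S) (hμS : μ S ≠ ⊤) {M : ℝ} (hM : ∀ x ∈ S, ‖v x‖ ≤ M) :
    ∫⁻ x in S, ‖v x‖ₑ ^ q ∂μ ≤ A ^ q := by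
  have hq1 := hpq.symm.sub_one_pos
  set X := ∫⁻ x in S, ‖v x‖ₑ ^ q ∂μ
  have hX : X ≠ ⊤ := setLIntegral_enorm_rpow_ne_top hpq.symm.nonneg hμS hM
  set g : α → ℂ := fun x ↦ ((‖v x‖ ^ (q - 2) : ℝ) : ℂ) * (starRingEnd ℂ) (v x)
  have hg : Measurable g := by fun_prop
  have hgenorm (x : α) : ‖g x‖ₑ = ‖v x‖ₑ ^ (q - 1) := enorm_norm_rpow_mul_conj hpq.symm.lt _
  have hgint : Integrable (S.indicator g) μ := by
    refine (Measure.integrableOn_of_bounded (M := M ^ (q - 1)) hμS hg.aestronglyMeasurable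
      ((ae_restrict_mem hS).mono fun x hx ↦ ?_)).integrable_indicator hS
    rw [← toReal_enorm, hgenorm, ← ENNReal.toReal_rpow, toReal_enorm]
    gcongr
    exact hM x hx
  have hpow : ∫⁻ x, ‖S.indicator g x‖ₑ ^ p ∂μ = X := by
    rw [show X = ∫⁻ x, S.indicator (fun x ↦ ‖v x‖ₑ ^ q) x ∂μ from (lintegral_indicator hS _).symm]
    refine lintegral_congr fun x ↦ ?_
    by_cases hx : x ∈ S
    · rw [indicator_of_mem hx, indicator_of_mem hx, hgenorm, ← ENNReal.rpow_mul,
        hpq.symm.sub_one_mul_conj]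
    · simp [hx, hpq.pos]
  have hpair : ∫ x, S.indicator g x * v x ∂μ = (X.toReal : ℂ) := by
    rw [← integral_toReal (by fun_prop) (ae_lt_top' (by fun_prop) hX), ← integral_complex_ofReal,
      ← integral_indicator hS]
    congr 1 with x
    by_cases hx : x ∈ S
    · simp only [indicator_of_mem hx, g, norm_rpow_mul_conj_mul_self hpq.symm.lt,
        ← ENNReal.toReal_rpow, toReal_enorm]
    · simp only [indicator_of_notMem hx, zero_mul]
  refine le_rpow_of_le_mul_rpow hpq hX ?_
  have := h _ (hg.indicator hS) hgint
  rwa [hpair, hpow, ← ofReal_norm, Complex.norm_real, Real.norm_of_nonneg ENNReal.toReal_nonneg,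
    ENNReal.ofReal_toReal hX] at this

theorem lintegral_enorm_rpow_le_of_pairing_le [SigmaFinite μ] (hpq : p.HolderConjugate q)
    (hv : Measurable v)
    (h : ∀ F : α → ℂ, Measurable F → Integrable F μ →
      ‖∫ x, F x * v x ∂μ‖ₑ ≤ A * (∫⁻ x, ‖F x‖ₑ ^ p ∂μ) ^ (1 / p)) :
    ∫⁻ x, ‖v x‖ₑ ^ q ∂μ ≤ A ^ q := by
  let S (n : ℕ) : Set α := spanningSets μ n ∩ {x | ‖v x‖ ≤ n}
  have hS : ⋃ n, S n = univ := by
    refine eq_univ_of_forall fun x ↦ mem_iUnion.2 ?_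
    obtain ⟨n, hn⟩ := exists_nat_ge ‖v x‖
    exact ⟨max (spanningSetsIndex μ x) n,
      mem_spanningSets_of_index_le μ x (le_max_left _ _), hn.trans (mod_cast le_max_right _ _)⟩
  have hmono : Monotone S := fun m n hmn ↦ inter_subset_inter (spanningSets_mono hmn)
    fun x (hx : ‖v x‖ ≤ m) ↦ hx.trans (mod_cast hmn)
  rw [← setLIntegral_univ, ← hS, setLIntegral_iUnion_of_directed _ hmono.directed_le]
  refine iSup_le fun n ↦ setLIntegral_enorm_rpow_le_of_pairing_le hpq hv h
    ((measurableSet_spanningSets μ n).inter (measurableSet_le hv.norm measurable_const))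
    (measure_ne_top_of_subset inter_subset_left (measure_spanningSets_lt_top μ n).ne)
    fun x hx ↦ hx.2

end Duality

section TTStar

variable {α β : Type*} [MeasurableSpace α] [MeasurableSpace β] {μ : Measure α} {ν : Measure β}
  {e : α → β → ℂ} {F : α → ℂ}

lemma integrable_mul_mul_conj_prod (he : Measurable (Function.uncurry e))
    (he1 : ∀ t ξ, ‖e t ξ‖ ≤ 1) {w : β → ℝ} (hw : Integrable w ν) (hF : Integrable F μ) :
    Integrable (fun a : β × α × α ↦ (w a.1 : ℂ) *
      (F a.2.1 * e a.2.1 a.1 * (starRingEnd ℂ) (F a.2.2 * e a.2.2 a.1))) (ν.prod (μ.prod μ)) := by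
  have hwc : Integrable (fun ξ ↦ (w ξ : ℂ)) ν := hw.ofReal
  have hFF : Integrable (fun z : α × α ↦ F z.1 * (starRingEnd ℂ) (F z.2)) (μ.prod μ) :=
    hF.mul_prod (Complex.conjCLE.toContinuousLinearMap.integrable_comp hF)
  have hee : Measurable fun a : β × α × α ↦ e a.2.1 a.1 * (starRingEnd ℂ) (e a.2.2 a.1) := by
    have : Measurable fun a : β × α × α ↦ e a.2.1 a.1 :=
      he.comp (measurable_snd.fst.prodMk measurable_fst)
    have : Measurable fun a : β × α × α ↦ e a.2.2 a.1 :=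
      he.comp (measurable_snd.snd.prodMk measurable_fst)
    fun_prop
  refine ((hwc.mul_prod hFF).bdd_mul (c := 1) hee.aestronglyMeasurable
    (ae_of_all _ fun a ↦ ?_)).congr (ae_of_all _ fun a ↦ ?_)
  · rw [norm_mul, RCLike.norm_conj]
    exact mul_le_one₀ (he1 _ _) (norm_nonneg _) (he1 _ _)
  · simp only [map_mul]
    ring

variable [SFinite μ] [SFinite ν]

/-- Expanding the square exhibits the kernel `∫ w(ξ) e(t, ξ) conj e(s, ξ) dν(ξ)` of `TT*`. -/
theorem lintegral_mul_enorm_integral_sq_le (he : Measurable (Function.uncurry e))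
    (he1 : ∀ t ξ, ‖e t ξ‖ ≤ 1) {w : β → ℝ} (hw : Integrable w ν) (hw0 : ∀ ξ, 0 ≤ w ξ)
    (hF : Integrable F μ) :
    ∫⁻ ξ, ENNReal.ofReal (w ξ) * ‖∫ t, F t * e t ξ ∂μ‖ₑ ^ 2 ∂ν ≤
      ∫⁻ t, ∫⁻ s, ‖F t‖ₑ * ‖F s‖ₑ *
        ‖∫ ξ, (w ξ : ℂ) * (e t ξ * (starRingEnd ℂ) (e s ξ)) ∂ν‖ₑ ∂μ ∂μ := by
  set G : β → ℂ := fun ξ ↦ ∫ t, F t * e t ξ ∂μ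
  set H : β → α × α → ℂ := fun ξ z ↦
    (w ξ : ℂ) * (F z.1 * e z.1 ξ * (starRingEnd ℂ) (F z.2 * e z.2 ξ))
  have hH : Integrable (Function.uncurry H) (ν.prod (μ.prod μ)) :=
    integrable_mul_mul_conj_prod he he1 hw hF
  have square (ξ : β) : ∫ z, H ξ z ∂μ.prod μ = ((w ξ * ‖G ξ‖ ^ 2 : ℝ) : ℂ) := by
    rw [integral_const_mul, integral_prod_mul (fun t ↦ F t * e t ξ)
      fun t ↦ (starRingEnd ℂ) (F t * e t ξ), integral_conj, Complex.mul_conj,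
      Complex.normSq_eq_norm_sq]
    push_cast
    rfl
  have kernel (z : α × α) : ∫ ξ, H ξ z ∂ν = F z.1 * (starRingEnd ℂ) (F z.2) *
      ∫ ξ, (w ξ : ℂ) * (e z.1 ξ * (starRingEnd ℂ) (e z.2 ξ)) ∂ν := by
    rw [← integral_const_mul]
    congr 1 with ξ
    simp only [H, map_mul]
    ring
  have hint : Integrable (fun ξ ↦ w ξ * ‖G ξ‖ ^ 2) ν := by
    have := hH.integral_prod_left
    simpa only [Function.uncurry, square, RCLike.re_eq_complex_re, Complex.ofReal_re] using this.re
  calc ∫⁻ ξ, ENNReal.ofReal (w ξ) * ‖G ξ‖ₑ ^ 2 ∂ν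
      = ENNReal.ofReal (∫ ξ, w ξ * ‖G ξ‖ ^ 2 ∂ν) := by
        rw [ofReal_integral_eq_lintegral_ofReal hint
          (ae_of_all _ fun ξ ↦ mul_nonneg (hw0 ξ) (sq_nonneg _))]
        congr 1 with ξ
        rw [ENNReal.ofReal_mul (hw0 ξ), ENNReal.ofReal_pow (norm_nonneg _), ofReal_norm]
    _ ≤ ‖∫ ξ, ((w ξ * ‖G ξ‖ ^ 2 : ℝ) : ℂ) ∂ν‖ₑ := by
        rw [integral_complex_ofReal, ← ofReal_norm, Complex.norm_real]
        exact ENNReal.ofReal_le_ofReal (le_abs_self _)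
    _ = ‖∫ z, ∫ ξ, H ξ z ∂ν ∂μ.prod μ‖ₑ := by
        simp only [← square]
        rw [integral_integral_swap hH]
    _ ≤ ∫⁻ z, ‖∫ ξ, H ξ z ∂ν‖ₑ ∂μ.prod μ := enorm_integral_le_lintegral_enorm _
    _ ≤ ∫⁻ t, ∫⁻ s, ‖∫ ξ, H ξ (t, s) ∂ν‖ₑ ∂μ ∂μ := lintegral_prod_le _
    _ = _ := by simp only [kernel, enorm_mul, RCLike.enorm_conj]

end TTStar

/-! ### The Airy evolution on the frequency side -/

/-- The homogeneous Sobolev norm `‖|ξ|^α φ‖_{L²}` of a function given by its Fourier transform. -/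
def weightedL2 (α : ℝ) (φ : ℝ → ℂ) : ℝ≥0∞ :=
  eLpNorm (fun ξ ↦ ((|ξ| ^ α : ℝ) : ℂ) * φ ξ) 2 volume

lemma eLpNorm_two_sq {X E : Type*} [MeasurableSpace X] [NormedAddCommGroup E] (f : X → E)
    (μ : Measure X) : eLpNorm f 2 μ ^ 2 = ∫⁻ x, ‖f x‖ₑ ^ 2 ∂μ := by
  simpa using eLpNorm_nnreal_pow_eq_lintegral (f := f) (μ := μ) (p := 2) two_ne_zero

lemma weightedL2_sq (α : ℝ) (φ : ℝ → ℂ) :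
    weightedL2 α φ ^ 2 = ∫⁻ ξ, ENNReal.ofReal (|ξ| ^ (2 * α)) * ‖φ ξ‖ₑ ^ 2 := by
  rw [weightedL2, eLpNorm_two_sq]
  refine lintegral_congr fun ξ ↦ ?_
  have hα : |ξ| ^ (2 * α) = (|ξ| ^ α) ^ 2 := by
    rw [mul_comm, ← Nat.cast_two, Real.rpow_mul_natCast (abs_nonneg _)]
  rw [enorm_mul, mul_pow, ← ofReal_norm, Complex.norm_real, Real.norm_of_nonneg (by positivity),
    hα, ENNReal.ofReal_pow (by positivity)]

lemma weightedL2_zero (φ : ℝ → ℂ) : weightedL2 0 φ = eLpNorm φ 2 volume := by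
  simp [weightedL2]

lemma enorm_integral_mul_le_weightedL2 {φ G : ℝ → ℂ} (hφ : AEStronglyMeasurable φ)
    (hG : AEStronglyMeasurable G) (α : ℝ) :
    ‖∫ ξ, φ ξ * G ξ‖ₑ ≤ weightedL2 (-α) φ * weightedL2 α G := by
  have hw (β : ℝ) : AEStronglyMeasurable fun ξ : ℝ ↦ ((|ξ| ^ β : ℝ) : ℂ) :=
    Measurable.aestronglyMeasurable (by fun_prop)
  have cancel : ∀ᵐ ξ : ℝ, φ ξ * G ξ =
      ((fun ξ ↦ ((|ξ| ^ (-α) : ℝ) : ℂ) * φ ξ) • fun ξ ↦ ((|ξ| ^ α : ℝ) : ℂ) * G ξ) ξ := by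
    filter_upwards [Measure.ae_ne volume 0] with ξ hξ
    have h1 : ((|ξ| ^ (-α) : ℝ) : ℂ) * ((|ξ| ^ α : ℝ) : ℂ) = 1 := by
      rw [← Complex.ofReal_mul, ← Real.rpow_add (abs_pos.2 hξ), neg_add_cancel, Real.rpow_zero,
        Complex.ofReal_one]
    rw [Pi.smul_apply', smul_eq_mul, mul_mul_mul_comm, h1, one_mul]
  calc ‖∫ ξ, φ ξ * G ξ‖ₑ ≤ eLpNorm (fun ξ ↦ φ ξ * G ξ) 1 volume :=
        (enorm_integral_le_lintegral_enorm _).trans_eq eLpNorm_one_eq_lintegral_enorm.symm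
    _ ≤ _ := by
        rw [eLpNorm_congr_ae cancel]
        exact eLpNorm_smul_le_mul_eLpNorm ((hw _).mul hG) ((hw _).mul hφ)

/-- The Fourier extension operator of the curve `τ = ξ³`: up to the factor `(2π)⁻¹`, the Airy
evolution of the function with Fourier transform `φ`. -/
def airyExtension (φ : ℝ → ℂ) (t x : ℝ) : ℂ := ∫ ξ, airyPhase t x ξ * φ ξ

lemma airySol_eq (u₀ : ℝ → ℂ) (t x : ℝ) :
    airySol u₀ t x = (2 * Real.pi)⁻¹ • airyExtension (ftx u₀) t x := by
  rw [airySol, iftx, airyExtension]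
  congr 2 with ξ
  rw [← mul_assoc, ← Complex.exp_add, airyPhase]
  congr 2
  push_cast
  ring

section AiryExtension

variable {φ : ℝ → ℂ}

lemma integrable_airyPhase_mul (hφ : Integrable φ) (t x : ℝ) :
    Integrable fun ξ ↦ airyPhase t x ξ * φ ξ :=
  hφ.bdd_mul (c := 1) (continuous_airyPhase.comp (by fun_prop :
    Continuous fun ξ ↦ (t, x, ξ))).aestronglyMeasurable
    (.of_forall fun ξ ↦ (norm_airyPhase t x ξ).le)

lemma airyExtension_of_not_integrable (hφ : ¬ Integrable φ) (t x : ℝ) :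
    airyExtension φ t x = 0 := by
  refine integral_undef fun h ↦ hφ ?_
  convert integrable_airyPhase_mul h (-t) (-x) using 2 with ξ
  rw [← mul_assoc, airyPhase_mul_airyPhase, neg_add_cancel, neg_add_cancel, airyPhase_zero, one_mul]

-- Outside `L¹` the Bochner integral takes its junk value.
lemma airySol_of_not_integrable {u₀ : ℝ → ℂ} (hu : ¬ Integrable (ftx u₀)) : airySol u₀ = 0 := by
  ext t x
  rw [airySol_eq, airyExtension_of_not_integrable hu, smul_zero, Pi.zero_apply, Pi.zero_apply]

lemma continuous_airyExtension (hφ : Integrable φ) :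
    Continuous (Function.uncurry (airyExtension φ)) :=
  continuous_of_dominated (bound := fun ξ ↦ ‖φ ξ‖)
    (fun z ↦ (integrable_airyPhase_mul hφ z.1 z.2).aestronglyMeasurable)
    (fun z ↦ .of_forall fun ξ ↦ by rw [norm_mul, norm_airyPhase, one_mul]) hφ.norm
    (.of_forall fun ξ ↦ (continuous_airyPhase.comp (by fun_prop :
      Continuous fun z : ℝ × ℝ ↦ (z.1, z.2, ξ))).mul continuous_const)

lemma eLpNorm_airyExtension_two_le (hφ : Integrable φ) (t : ℝ) :
    eLpNorm (airyExtension φ t) 2 volume ≤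
      ENNReal.ofReal (2 * Real.pi) * eLpNorm φ 2 volume := by
  have hpi : 0 < 2 * Real.pi := by positivity
  rcases eq_or_ne (eLpNorm φ 2 volume) ⊤ with htop | htop
  · rw [htop, ENNReal.mul_top (by simpa using Real.pi_pos)]
    exact le_top
  set g : ℝ → ℂ := fun ξ ↦ airyPhase t 0 ξ * φ ξ
  have hgφ (ξ : ℝ) : ‖g ξ‖ = ‖φ ξ‖ := by rw [norm_mul, norm_airyPhase, one_mul]
  have hg : Integrable g := integrable_airyPhase_mul hφ t 0
  have hg2 : eLpNorm g 2 volume = eLpNorm φ 2 volume := eLpNorm_congr_norm_ae (.of_forall hgφ)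
  have hext : airyExtension φ t = (2 * Real.pi) • iftx g := by
    ext x
    rw [Pi.smul_apply, iftx, smul_inv_smul₀ hpi.ne', airyExtension]
    congr 1 with ξ
    rw [← mul_assoc, ← zero_add x, ← add_zero t, ← airyPhase_mul_airyPhase]
    simp [airyPhase, mul_comm]
  rw [hext, eLpNorm_const_smul,
    eLpNorm_iftx hg ⟨hg.aestronglyMeasurable, hg2.trans_lt htop.lt_top⟩, hg2,
    Real.enorm_eq_ofReal hpi.le]
  gcongr
  refine mul_le_of_le_one_left' (ENNReal.ofReal_le_one.2 ?_)
  exact Real.rpow_le_one_of_one_le_of_nonpos (by linarith [Real.pi_gt_three]) (by norm_num)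

end AiryExtension

/-! ### The endpoint estimate -/

section Endpoint

variable {F φ : ℝ → ℂ} {y : ℝ → ℝ}

lemma measurable_airyPhase_comp (hy : Measurable y) :
    Measurable fun z : ℝ × ℝ ↦ airyPhase z.1 (y z.1) z.2 :=
  continuous_airyPhase.measurable.comp
    (by fun_prop : Measurable fun z : ℝ × ℝ ↦ (z.1, y z.1, z.2))

lemma enorm_integral_Icc_airyPhase_le {M : ℝ} (hM : 0 ≤ M) (t s x x' : ℝ) :
    ‖∫ ξ in Icc (-M) M, (√|ξ| : ℂ) * (airyPhase t x ξ * (starRingEnd ℂ) (airyPhase s x' ξ))‖ₑ ≤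
      20 * ‖t - s‖ₑ ^ (-(1 / 2) : ℝ) := by
  rcases eq_or_ne t s with rfl | hts
  · simp
  have hne : t - s ≠ 0 := sub_ne_zero.2 hts
  simp only [conj_airyPhase, airyPhase_mul_airyPhase, ← sub_eq_add_neg]
  rw [integral_Icc_eq_integral_Ioc, ← intervalIntegral.integral_of_le (by linarith)]
  calc _ ≤ ENNReal.ofReal (20 * |t - s| ^ (-(1 / 2) : ℝ)) := by
        rw [← ofReal_norm, Real.rpow_neg (abs_nonneg _), ← Real.sqrt_eq_rpow, ← div_eq_mul_inv]
        exact ENNReal.ofReal_le_ofReal (norm_integral_airyPhase_le hne _ hM)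
    _ = _ := by
        rw [ENNReal.ofReal_mul (by norm_num), ← ENNReal.ofReal_rpow_of_pos (abs_pos.2 hne),
          Real.enorm_eq_ofReal_abs, ENNReal.ofReal_ofNat]

lemma hardyLittlewoodSobolev_const_le :
    (20 : ℝ≥0∞) * (2 * (ENNReal.ofReal (2 / (1 - 1 / 2)) + 2 ^ ((1 / 2 : ℝ) / 2))) ≤ 16 ^ 2 := by
  have h2 : (2 : ℝ≥0∞) ^ ((1 / 2 : ℝ) / 2) ≤ 2 ^ (1 : ℝ) :=
    ENNReal.rpow_le_rpow_of_exponent_le one_le_two (by norm_num)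
  calc _ ≤ (20 : ℝ≥0∞) * (2 * (ENNReal.ofReal 4 + 2)) := by
        rw [ENNReal.rpow_one] at h2
        gcongr
        norm_num
    _ ≤ 16 ^ 2 := by norm_num

lemma setLIntegral_sqrt_mul_enorm_integral_airyPhase_sq_le (hF : Measurable F) (hFi : Integrable F)
    (hy : Measurable y) {M : ℝ} (hM : 0 ≤ M) :
    ∫⁻ ξ in Icc (-M) M, ENNReal.ofReal √|ξ| * ‖∫ t, F t * airyPhase t (y t) ξ‖ₑ ^ 2 ≤
      16 ^ 2 * (∫⁻ t, ‖F t‖ₑ ^ (4 / 3 : ℝ)) ^ (3 / 2 : ℝ) := by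
  have hw : IntegrableOn (fun ξ : ℝ ↦ √|ξ|) (Icc (-M) M) :=
    Continuous.integrableOn_Icc (by fun_prop)
  calc _ ≤ ∫⁻ t, ∫⁻ s, ‖F t‖ₑ * ‖F s‖ₑ * ‖∫ ξ in Icc (-M) M, (√|ξ| : ℂ) *
          (airyPhase t (y t) ξ * (starRingEnd ℂ) (airyPhase s (y s) ξ))‖ₑ :=
        lintegral_mul_enorm_integral_sq_le (measurable_airyPhase_comp hy)
          (fun t ξ ↦ (norm_airyPhase _ _ _).le) hw (fun ξ ↦ Real.sqrt_nonneg _) hFi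
    _ ≤ ∫⁻ t, ∫⁻ s, 20 * (‖F t‖ₑ * ‖F s‖ₑ * ‖t - s‖ₑ ^ (-(1 / 2) : ℝ)) := by
        refine lintegral_mono fun t ↦ lintegral_mono fun s ↦ ?_
        exact (mul_le_mul_right (enorm_integral_Icc_airyPhase_le hM t s (y t) (y s)) _).trans_eq
          (mul_left_comm _ _ _)
    _ = 20 * ∫⁻ t, ∫⁻ s, ‖F t‖ₑ * ‖F s‖ₑ * ‖t - s‖ₑ ^ (-(1 / 2) : ℝ) := by
        simp only [lintegral_const_mul' 20 _ (by norm_num)]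
    _ ≤ 20 * (2 * (ENNReal.ofReal (2 / (1 - 1 / 2)) + 2 ^ ((1 / 2 : ℝ) / 2)) *
          (∫⁻ t, ‖F t‖ₑ ^ (4 / 3 : ℝ)) ^ (2 - 1 / 2 : ℝ)) := by
        gcongr
        exact lintegral_lintegral_mul_enorm_sub_rpow_le (by norm_num) (by norm_num) (by norm_num)
          hF.enorm fun t ↦ enorm_ne_top
    _ ≤ _ := by
        rw [← mul_assoc, show (2 - 1 / 2 : ℝ) = 3 / 2 by norm_num]
        gcongr
        exact hardyLittlewoodSobolev_const_le

lemma iUnion_Icc_neg_natCast : ⋃ n : ℕ, Icc (-(n : ℝ)) n = univ :=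
  eq_univ_of_forall fun x ↦ mem_iUnion.2 <| (exists_nat_ge |x|).imp fun _ ↦ abs_le.1

theorem weightedL2_integral_mul_airyPhase_le (hF : Measurable F) (hFi : Integrable F)
    (hy : Measurable y) :
    weightedL2 (1 / 4) (fun ξ ↦ ∫ t, F t * airyPhase t (y t) ξ) ≤
      16 * (∫⁻ t, ‖F t‖ₑ ^ (4 / 3 : ℝ)) ^ (1 / (4 / 3) : ℝ) := by
  have hmono : Monotone fun n : ℕ ↦ Icc (-(n : ℝ)) n := fun m n hmn ↦
    Icc_subset_Icc (neg_le_neg (mod_cast hmn)) (mod_cast hmn)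
  rw [← ENNReal.pow_le_pow_left_iff two_ne_zero, weightedL2_sq, mul_pow, ← ENNReal.rpow_mul_natCast]
  norm_num1
  simp only [← Real.sqrt_eq_rpow]
  rw [← setLIntegral_univ, ← iUnion_Icc_neg_natCast,
    setLIntegral_iUnion_of_directed _ hmono.directed_le]
  refine iSup_le fun n ↦ (setLIntegral_sqrt_mul_enorm_integral_airyPhase_sq_le hF hFi hy
    n.cast_nonneg).trans (by norm_num)

lemma integral_mul_airyExtension (hφ : Integrable φ) (hF : Integrable F) (hy : Measurable y) :
    ∫ t, F t * airyExtension φ t (y t) = ∫ ξ, φ ξ * ∫ t, F t * airyPhase t (y t) ξ := by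
  simp only [airyExtension, ← integral_const_mul]
  rw [integral_integral_swap]
  · refine integral_congr_ae (.of_forall fun ξ ↦ integral_congr_ae (.of_forall fun t ↦ ?_))
    ring
  · refine ((hF.mul_prod hφ).bdd_mul (c := 1) (measurable_airyPhase_comp hy).aestronglyMeasurable
      (.of_forall fun z ↦ (norm_airyPhase _ _ _).le)).congr (.of_forall fun z ↦ ?_)
    simp only [Function.uncurry]
    ring

theorem lintegral_enorm_airyExtension_pow_four_le (hφ : Integrable φ) (hy : Measurable y) :
    ∫⁻ t, ‖airyExtension φ t (y t)‖ₑ ^ (4 : ℝ) ≤ (16 * weightedL2 (-(1 / 4)) φ) ^ (4 : ℝ) := by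
  have hpq : (4 / 3 : ℝ).HolderConjugate 4 := by
    rw [Real.holderConjugate_iff]
    norm_num
  have hv : Measurable fun t ↦ airyExtension φ t (y t) := by
    have := (continuous_airyExtension hφ).measurable
    fun_prop
  refine lintegral_enorm_rpow_le_of_pairing_le hpq hv fun F hF hFi ↦ ?_
  have hG : AEStronglyMeasurable fun ξ ↦ ∫ t, F t * airyPhase t (y t) ξ := by
    have := (hF.comp measurable_fst).mul (measurable_airyPhase_comp hy)
    exact (this.stronglyMeasurable.integral_prod_left' (μ := volume)).aestronglyMeasurable
  calc ‖∫ t, F t * airyExtension φ t (y t)‖ₑ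
      ≤ weightedL2 (-(1 / 4)) φ * weightedL2 (1 / 4) fun ξ ↦ ∫ t, F t * airyPhase t (y t) ξ := by
        rw [integral_mul_airyExtension hφ hFi hy]
        exact enorm_integral_mul_le_weightedL2 hφ.aestronglyMeasurable hG _
    _ ≤ weightedL2 (-(1 / 4)) φ *
          (16 * (∫⁻ t, ‖F t‖ₑ ^ (4 / 3 : ℝ)) ^ (1 / (4 / 3) : ℝ)) := by
        gcongr
        exact weightedL2_integral_mul_airyPhase_le hF hFi hy
    _ = _ := by ring

end Endpoint

/-! ### Linearization of the supremum -/

section Selection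

variable {α X : Type*}

/-- A maximizer of `g` among the first `n + 1` terms of the sequence `d`. -/
def runningArgmax (g : X → ℝ≥0∞) (d : ℕ → X) : ℕ → X
  | 0 => d 0
  | n + 1 => if g (runningArgmax g d n) < g (d (n + 1)) then d (n + 1) else runningArgmax g d n

lemma monotone_runningArgmax (g : X → ℝ≥0∞) (d : ℕ → X) :
    Monotone fun n ↦ g (runningArgmax g d n) := by
  refine monotone_nat_of_le_succ fun n ↦ ?_
  rw [runningArgmax]
  split_ifs with h
  exacts [h.le, le_rfl]

lemma le_runningArgmax (g : X → ℝ≥0∞) (d : ℕ → X) : ∀ n, g (d n) ≤ g (runningArgmax g d n)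
  | 0 => le_rfl
  | n + 1 => by
    rw [runningArgmax]
    split_ifs with h
    exacts [le_rfl, not_lt.1 h]

lemma iSup_runningArgmax [TopologicalSpace X] {g : X → ℝ≥0∞} (hg : LowerSemicontinuous g)
    {d : ℕ → X} (hd : DenseRange d) : ⨆ n, g (runningArgmax g d n) = ⨆ x, g x := by
  refine le_antisymm (iSup_le fun n ↦ le_iSup g _) (iSup_le fun x ↦ ?_)
  refine closure_minimal (t := {x | g x ≤ ⨆ n, g (runningArgmax g d n)}) ?_
    (hg.isClosed_preimage _) (hd x)
  rintro _ ⟨n, rfl⟩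
  exact (le_runningArgmax g d n).trans (le_iSup (fun n ↦ g (runningArgmax g d n)) n)

variable [MeasurableSpace α] [MeasurableSpace X] {f : α → X → ℝ≥0∞}

lemma measurable_runningArgmax (hf : Measurable (Function.uncurry f)) (d : ℕ → X) (n : ℕ) :
    Measurable fun t ↦ runningArgmax (f t) d n := by
  induction n with
  | zero => exact measurable_const
  | succ n ih =>
    exact .ite (measurableSet_lt (hf.comp (measurable_id.prodMk ih))
      (hf.comp (measurable_id.prodMk measurable_const))) measurable_const ih

variable [TopologicalSpace X] [TopologicalSpace.SeparableSpace X] [Nonempty X]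

theorem exists_measurable_seq_iSup_eq (hf : Measurable (Function.uncurry f))
    (hlsc : ∀ t, LowerSemicontinuous (f t)) :
    ∃ y : ℕ → α → X, (∀ n, Measurable (y n)) ∧ (∀ t, Monotone fun n ↦ f t (y n t)) ∧
      ∀ t, ⨆ n, f t (y n t) = ⨆ x, f t x :=
  ⟨fun n t ↦ runningArgmax (f t) (TopologicalSpace.denseSeq X) n,
    measurable_runningArgmax hf _, fun t ↦ monotone_runningArgmax (f t) _,
    fun t ↦ iSup_runningArgmax (hlsc t) (TopologicalSpace.denseRange_denseSeq X)⟩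

lemma measurable_iSup_of_lowerSemicontinuous (hf : Measurable (Function.uncurry f))
    (hlsc : ∀ t, LowerSemicontinuous (f t)) : Measurable fun t ↦ ⨆ x, f t x := by
  obtain ⟨y, hy, -, hsup⟩ := exists_measurable_seq_iSup_eq hf hlsc
  simp only [← hsup]
  exact .iSup fun n ↦ hf.comp (measurable_id.prodMk (hy n))

theorem lintegral_iSup_rpow_le {μ : Measure α} (hf : Measurable (Function.uncurry f))
    (hlsc : ∀ t, LowerSemicontinuous (f t)) {q : ℝ} (hq : 0 < q) {A : ℝ≥0∞}
    (hA : ∀ y : α → X, Measurable y → ∫⁻ t, f t (y t) ^ q ∂μ ≤ A) :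
    ∫⁻ t, (⨆ x, f t x) ^ q ∂μ ≤ A := by
  obtain ⟨y, hy, hmono, hsup⟩ := exists_measurable_seq_iSup_eq hf hlsc
  calc ∫⁻ t, (⨆ x, f t x) ^ q ∂μ = ∫⁻ t, ⨆ n, f t (y n t) ^ q ∂μ :=
        lintegral_congr fun t ↦ by
          rw [← hsup]
          exact (ENNReal.orderIsoRpow q hq).map_iSup _
    _ = ⨆ n, ∫⁻ t, f t (y n t) ^ q ∂μ :=
        lintegral_iSup (fun n ↦ (hf.comp (measurable_id.prodMk (hy n))).pow_const q)
          fun m n hmn t ↦ ENNReal.rpow_le_rpow (hmono t hmn) hq.le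
    _ ≤ A := iSup_le fun n ↦ hA _ (hy n)

end Selection

section Maximal

variable {φ : ℝ → ℂ}

lemma measurable_enorm_airyExtension (hφ : Integrable φ) :
    Measurable (Function.uncurry fun t x ↦ ‖airyExtension φ t x‖ₑ) :=
  (continuous_airyExtension hφ).enorm.measurable

lemma lowerSemicontinuous_enorm_airyExtension (hφ : Integrable φ) (t : ℝ) :
    LowerSemicontinuous fun x ↦ ‖airyExtension φ t x‖ₑ :=
  ((continuous_airyExtension hφ).uncurry_left t).enorm.lowerSemicontinuous

lemma measurable_iSup_enorm_airyExtension (hφ : Integrable φ) :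
    Measurable fun t ↦ ⨆ x, ‖airyExtension φ t x‖ₑ :=
  measurable_iSup_of_lowerSemicontinuous (measurable_enorm_airyExtension hφ)
    (lowerSemicontinuous_enorm_airyExtension hφ)

theorem lintegral_iSup_enorm_airyExtension_pow_four_le (hφ : Integrable φ) :
    ∫⁻ t, (⨆ x, ‖airyExtension φ t x‖ₑ) ^ (4 : ℝ) ≤ (16 * weightedL2 (-(1 / 4)) φ) ^ (4 : ℝ) :=
  lintegral_iSup_rpow_le (measurable_enorm_airyExtension hφ)
    (lowerSemicontinuous_enorm_airyExtension hφ) four_pos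
    fun _ hy ↦ lintegral_enorm_airyExtension_pow_four_le hφ hy

end Maximal

/-! ### Mixed norms -/

section MixedNorm

variable {α β ι ε : Type*} [MeasurableSpace α] [MeasurableSpace β] {μ : Measure α} {ν : Measure β}
  {p q r : ℝ}

lemma eLpNorm'_mul_le (hp : 0 < p) (hpq : p < q) (hpqr : 1 / p = 1 / q + 1 / r)
    {f g : α → ℝ≥0∞} (hf : AEMeasurable f μ) (hg : AEMeasurable g μ) :
    eLpNorm' (fun x ↦ f x * g x) p μ ≤ eLpNorm' f q μ * eLpNorm' g r μ :=
  ENNReal.lintegral_Lp_mul_le_Lq_mul_Lr hp hpq hpqr μ hf hg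

lemma eLpNorm'_pow (f : α → ℝ≥0∞) {n : ℕ} (hn : n ≠ 0) (p : ℝ) :
    eLpNorm' (fun x ↦ f x ^ n) p μ = eLpNorm' f (n * p) μ ^ n := by
  have hn' : (n : ℝ) ≠ 0 := mod_cast hn
  simp only [eLpNorm', enorm_eq_self, ← ENNReal.rpow_natCast, ← ENNReal.rpow_mul]
  congr 1
  field_simp

lemma eLpNorm'_tsum_le [Countable ι] (hp : 1 ≤ p) {f : ι → α → ℝ≥0∞}
    (hf : ∀ i, AEMeasurable (f i) μ) :
    eLpNorm' (fun x ↦ ∑' i, f i x) p μ ≤ ∑' i, eLpNorm' (f i) p μ := by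
  have hp0 : 0 < p := zero_lt_one.trans_le hp
  have hsum (s : Finset ι) : AEMeasurable (fun x ↦ ∑ i ∈ s, f i x) μ :=
    s.aemeasurable_fun_sum fun i _ ↦ hf i
  have hpow (x : α) : (∑' i, f i x) ^ p = ⨆ s : Finset ι, (∑ i ∈ s, f i x) ^ p := by
    rw [ENNReal.tsum_eq_iSup_sum]
    exact (ENNReal.orderIsoRpow p hp0).map_iSup _
  calc eLpNorm' (fun x ↦ ∑' i, f i x) p μ
      = (⨆ s : Finset ι, ∫⁻ x, (∑ i ∈ s, f i x) ^ p ∂μ) ^ (1 / p) := by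
        simp only [eLpNorm', enorm_eq_self, hpow]
        rw [lintegral_iSup_directed fun s ↦ (hsum s).pow_const p]
        refine Monotone.directed_le fun s t hst x ↦ ?_
        exact ENNReal.rpow_le_rpow (Finset.sum_le_sum_of_subset hst) hp0.le
    _ = ⨆ s : Finset ι, eLpNorm' (∑ i ∈ s, f i) p μ := by
        simp only [eLpNorm', enorm_eq_self, Finset.sum_apply]
        exact (ENNReal.orderIsoRpow (1 / p) (by positivity)).map_iSup _
    _ ≤ ∑' i, eLpNorm' (f i) p μ := iSup_le fun s ↦
        (eLpNorm'_sum_le (fun i _ ↦ (hf i).aestronglyMeasurable) hp).trans (ENNReal.sum_le_tsum s)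

/-- The mixed norm `L^p_t L^q_x`, for finite exponents. -/
def mixedNorm [ENorm ε] (p q : ℝ) (μ : Measure α) (ν : Measure β) (f : α → β → ε) : ℝ≥0∞ :=
  eLpNorm' (fun t ↦ eLpNorm' (f t) q ν) p μ

lemma mixedNorm_mono [ENorm ε] {ε' : Type*} [ENorm ε'] {f : α → β → ε} {g : α → β → ε'}
    (hp : 0 ≤ p) (hq : 0 ≤ q) (h : ∀ t x, ‖f t x‖ₑ ≤ ‖g t x‖ₑ) :
    mixedNorm p q μ ν f ≤ mixedNorm p q μ ν g :=
  eLpNorm'_mono_enorm_ae hp (.of_forall fun t ↦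
    eLpNorm'_mono_enorm_ae hq (.of_forall fun x ↦ h t x))

lemma mixedNorm_enorm {E : Type*} [NormedAddCommGroup E] (f : α → β → E) :
    mixedNorm p q μ ν f = mixedNorm p q μ ν fun t x ↦ ‖f t x‖ₑ := by
  simp only [mixedNorm, eLpNorm'_enorm]

lemma mixedNorm_pow (f : α → β → ℝ≥0∞) {n : ℕ} (hn : n ≠ 0) (p q : ℝ) :
    mixedNorm p q μ ν (fun t x ↦ f t x ^ n) = mixedNorm (n * p) (n * q) μ ν f ^ n := by
  simp only [mixedNorm, eLpNorm'_pow _ hn]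

section Measurable

variable [SFinite ν]

lemma measurable_eLpNorm'_right {f : α → β → ℝ≥0∞} (hf : Measurable (Function.uncurry f)) (q : ℝ) :
    Measurable fun t ↦ eLpNorm' (f t) q ν :=
  ((hf.pow_const q).lintegral_prod_right').pow_const _

lemma mixedNorm_mul_le {p₁ p₂ q₁ q₂ : ℝ} (hp : 0 < p) (hp₁ : p < p₁) (hpp : 1 / p = 1 / p₁ + 1 / p₂)
    (hq : 0 < q) (hq₁ : q < q₁) (hqq : 1 / q = 1 / q₁ + 1 / q₂) {f g : α → β → ℝ≥0∞}
    (hf : Measurable (Function.uncurry f)) (hg : Measurable (Function.uncurry g)) :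
    mixedNorm p q μ ν (fun t x ↦ f t x * g t x) ≤
      mixedNorm p₁ q₁ μ ν f * mixedNorm p₂ q₂ μ ν g :=
  calc mixedNorm p q μ ν (fun t x ↦ f t x * g t x)
      ≤ eLpNorm' (fun t ↦ eLpNorm' (f t) q₁ ν * eLpNorm' (g t) q₂ ν) p μ :=
        eLpNorm'_mono_enorm_ae hp.le (.of_forall fun _ ↦ eLpNorm'_mul_le hq hq₁ hqq
          hf.of_uncurry_left.aemeasurable hg.of_uncurry_left.aemeasurable)
    _ ≤ _ := eLpNorm'_mul_le hp hp₁ hpp (measurable_eLpNorm'_right hf _).aemeasurable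
          (measurable_eLpNorm'_right hg _).aemeasurable

lemma mixedNorm_tsum_le [Countable ι] (hp : 1 ≤ p) (hq : 1 ≤ q) {f : ι → α → β → ℝ≥0∞}
    (hf : ∀ i, Measurable (Function.uncurry (f i))) :
    mixedNorm p q μ ν (fun t x ↦ ∑' i, f i t x) ≤ ∑' i, mixedNorm p q μ ν (f i) :=
  calc mixedNorm p q μ ν (fun t x ↦ ∑' i, f i t x)
      ≤ eLpNorm' (fun t ↦ ∑' i, eLpNorm' (f i t) q ν) p μ :=
        eLpNorm'_mono_enorm_ae (by positivity) (.of_forall fun _ ↦ eLpNorm'_tsum_le hq fun i ↦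
          (hf i).of_uncurry_left.aemeasurable)
    _ ≤ _ := eLpNorm'_tsum_le hp fun i ↦ (measurable_eLpNorm'_right (hf i) q).aemeasurable

end Measurable

lemma eLpNorm'_le_rpow_mul_rpow_of_le {θ : ℝ} (hq : 0 < q) (hθ₀ : 0 < θ) (hθ₁ : θ ≤ 1)
    {f : β → ℝ≥0∞} (hf : AEMeasurable f ν) {b : ℝ≥0∞} (hfb : ∀ x, f x ≤ b) :
    eLpNorm' f q ν ≤ eLpNorm' f (θ * q) ν ^ θ * b ^ (1 - θ) := by
  have : 0 ≤ 1 - θ := sub_nonneg.2 hθ₁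
  have hsplit (x : β) : f x ^ q ≤ f x ^ (θ * q) * b ^ ((1 - θ) * q) := by
    calc f x ^ q = f x ^ (θ * q) * f x ^ ((1 - θ) * q) := by
          rw [← ENNReal.rpow_add_of_nonneg _ _ (by positivity) (by positivity)]
          ring_nf
      _ ≤ _ := by
          gcongr
          exact hfb x
  calc eLpNorm' f q ν ≤ (∫⁻ x, f x ^ (θ * q) * b ^ ((1 - θ) * q) ∂ν) ^ (1 / q) :=
        ENNReal.rpow_le_rpow (lintegral_mono hsplit) (by positivity)
    _ = _ := by
        rw [lintegral_mul_const'' _ (hf.pow_const _),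
          ENNReal.mul_rpow_of_nonneg _ _ (by positivity), eLpNorm', ← ENNReal.rpow_mul,
          ← ENNReal.rpow_mul]
        simp only [enorm_eq_self]
        congr 2 <;> field_simp

lemma eLpNorm'_const_mul_rpow {θ : ℝ} (hp : 0 < p) (hθ : 0 < θ) (A : ℝ≥0∞) {B : α → ℝ≥0∞}
    (hB : Measurable B) :
    eLpNorm' (fun t ↦ A * B t ^ θ) p μ = A * eLpNorm' B (θ * p) μ ^ θ := by
  simp only [eLpNorm', enorm_eq_self, ENNReal.mul_rpow_of_nonneg _ _ hp.le, ← ENNReal.rpow_mul]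
  rw [lintegral_const_mul _ (hB.pow_const _), ENNReal.mul_rpow_of_nonneg _ _ (by positivity),
    ← ENNReal.rpow_mul, mul_one_div_cancel hp.ne', ENNReal.rpow_one]
  congr 2
  field_simp

/-- Log-convexity between `L^∞_t L^{θq}_x` and `L^{(1-θ)p}_t L^∞_x`. -/
lemma mixedNorm_le_rpow_mul_rpow {θ : ℝ} (hp : 0 < p) (hq : 0 < q) (hθ₀ : 0 < θ) (hθ₁ : θ < 1)
    {f : α → β → ℝ≥0∞} (hf : ∀ t, AEMeasurable (f t) ν) {A : ℝ≥0∞}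
    (hfA : ∀ t, eLpNorm' (f t) (θ * q) ν ≤ A) {B : α → ℝ≥0∞} (hB : Measurable B)
    (hfB : ∀ t x, f t x ≤ B t) :
    mixedNorm p q μ ν f ≤ A ^ θ * eLpNorm' B ((1 - θ) * p) μ ^ (1 - θ) := by
  rw [← eLpNorm'_const_mul_rpow hp (sub_pos.2 hθ₁) _ hB]
  refine eLpNorm'_mono_enorm_ae hp.le (.of_forall fun t ↦ ?_)
  calc eLpNorm' (f t) q ν ≤ eLpNorm' (f t) (θ * q) ν ^ θ * B t ^ (1 - θ) :=
        eLpNorm'_le_rpow_mul_rpow_of_le hq hθ₀ hθ₁.le (hf t) (hfB t)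
    _ ≤ A ^ θ * B t ^ (1 - θ) := by
        gcongr
        exact hfA t

end MixedNorm

/-! ### Dyadic decomposition -/

section Dyadic

/-- The dyadic frequency shell `{2^k ≤ |ξ| < 2^(k+1)}`. -/
def dyadicShell (k : ℤ) : Set ℝ := abs ⁻¹' Ico ((2 : ℝ) ^ k) (2 ^ (k + 1))

lemma measurableSet_dyadicShell (k : ℤ) : MeasurableSet (dyadicShell k) :=
  measurableSet_preimage (by fun_prop) measurableSet_Ico

lemma pairwise_disjoint_dyadicShell : Pairwise (Function.onFun Disjoint dyadicShell) :=
  fun _ _ h ↦ ((zpow_right_mono₀ one_le_two).pairwise_disjoint_on_Ico_succ h).preimage _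

lemma iUnion_dyadicShell : ⋃ k, dyadicShell k = {0}ᶜ := by
  refine Subset.antisymm (iUnion_subset fun k ξ hξ ↦ ?_) fun ξ hξ ↦ ?_
  · exact abs_pos.1 ((zpow_pos two_pos k).trans_le hξ.1)
  · exact mem_iUnion.2 (exists_mem_Ico_zpow (abs_pos.2 hξ) one_lt_two)

lemma restrict_iUnion_dyadicShell :
    (volume : Measure ℝ).restrict (⋃ k, dyadicShell k) = volume := by
  rw [iUnion_dyadicShell]
  exact Measure.restrict_eq_self_of_ae_mem (Measure.ae_ne volume 0)

variable {φ : ℝ → ℂ} {s : ℝ} {k : ℤ} {ξ : ℝ}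

lemma hasSum_airyExtension_indicator_dyadicShell (hφ : Integrable φ) (t x : ℝ) :
    HasSum (fun k ↦ airyExtension ((dyadicShell k).indicator φ) t x) (airyExtension φ t x) := by
  have hsum := hasSum_integral_iUnion measurableSet_dyadicShell pairwise_disjoint_dyadicShell
    (integrable_airyPhase_mul hφ t x).integrableOn
  rw [restrict_iUnion_dyadicShell] at hsum
  refine hsum.congr_fun fun k ↦ ?_
  rw [airyExtension, ← integral_indicator (measurableSet_dyadicShell k)]
  congr 1 with ξ
  exact (indicator_mul_right _ _ _).symm

lemma enorm_airyExtension_le_tsum (hφ : Integrable φ) (t x : ℝ) :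
    ‖airyExtension φ t x‖ₑ ≤ ∑' k, ‖airyExtension ((dyadicShell k).indicator φ) t x‖ₑ := by
  rw [← (hasSum_airyExtension_indicator_dyadicShell hφ t x).tsum_eq]
  exact enorm_tsum_le_tsum_enorm

lemma tsum_weightedL2_indicator_dyadicShell_sq (α : ℝ) (φ : ℝ → ℂ) :
    ∑' k, weightedL2 α ((dyadicShell k).indicator φ) ^ 2 = weightedL2 α φ ^ 2 := by
  have hk (k : ℤ) : weightedL2 α ((dyadicShell k).indicator φ) ^ 2 =
      ∫⁻ ξ in dyadicShell k, ENNReal.ofReal (|ξ| ^ (2 * α)) * ‖φ ξ‖ₑ ^ 2 := by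
    rw [weightedL2_sq, ← lintegral_indicator (measurableSet_dyadicShell k)]
    refine lintegral_congr fun ξ ↦ ?_
    by_cases hξ : ξ ∈ dyadicShell k <;> simp [hξ]
  simp only [hk]
  rw [weightedL2_sq, ← lintegral_iUnion measurableSet_dyadicShell pairwise_disjoint_dyadicShell,
    restrict_iUnion_dyadicShell]

lemma abs_rpow_neg_le_of_mem_dyadicShell (hs : 0 ≤ s) (hξ : ξ ∈ dyadicShell k) :
    |ξ| ^ (-s) ≤ (2 : ℝ) ^ (-(s * k)) :=
  calc |ξ| ^ (-s) ≤ ((2 : ℝ) ^ k) ^ (-s) :=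
        Real.rpow_le_rpow_of_nonpos (by positivity) hξ.1 (neg_nonpos.2 hs)
    _ = 2 ^ (-(s * k)) := by
        rw [← Real.rpow_intCast, ← Real.rpow_mul two_pos.le]
        ring_nf

lemma one_le_mul_abs_rpow_neg_of_mem_dyadicShell (hs : 0 ≤ s) (hξ : ξ ∈ dyadicShell k) :
    1 ≤ (2 : ℝ) ^ (s * (k + 1)) * |ξ| ^ (-s) := by
  have hξ₀ : 0 < |ξ| := (zpow_pos two_pos k).trans_le hξ.1
  calc 1 = |ξ| ^ s * |ξ| ^ (-s) := by rw [← Real.rpow_add hξ₀, add_neg_cancel, Real.rpow_zero]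
    _ ≤ ((2 : ℝ) ^ (k + 1)) ^ s * |ξ| ^ (-s) := by
        gcongr
        exact hξ.2.le
    _ = 2 ^ (s * (k + 1)) * |ξ| ^ (-s) := by
        rw [← Real.rpow_intCast, ← Real.rpow_mul two_pos.le, mul_comm s]
        push_cast
        rfl

lemma weightedL2_indicator_le_mul {α β c : ℝ} {S : Set ℝ} (h : ∀ ξ ∈ S, |ξ| ^ α ≤ c * |ξ| ^ β)
    (φ : ℝ → ℂ) :
    weightedL2 α (S.indicator φ) ≤ ENNReal.ofReal c * weightedL2 β (S.indicator φ) := by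
  refine eLpNorm_le_mul_eLpNorm_of_ae_le_mul (.of_forall fun ξ ↦ ?_) 2
  by_cases hξ : ξ ∈ S
  · simp only [norm_mul, Complex.norm_real, ← mul_assoc]
    gcongr
    rw [Real.norm_of_nonneg (by positivity), Real.norm_of_nonneg (by positivity)]
    exact h ξ hξ
  · simp [hξ]

lemma weightedL2_neg_indicator_dyadicShell_le (hs : 0 ≤ s) (k : ℤ) (φ : ℝ → ℂ) :
    weightedL2 (-s) ((dyadicShell k).indicator φ) ≤
      2 ^ (-(s * k)) * eLpNorm ((dyadicShell k).indicator φ) 2 volume := by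
  rw [← weightedL2_zero, ← ENNReal.ofReal_ofNat 2, ENNReal.ofReal_rpow_of_pos two_pos]
  refine weightedL2_indicator_le_mul (fun ξ hξ ↦ ?_) φ
  simpa using abs_rpow_neg_le_of_mem_dyadicShell hs hξ

lemma two_rpow_mul_eLpNorm_indicator_dyadicShell_le (hs : 0 ≤ s) (k : ℤ) (φ : ℝ → ℂ) :
    2 ^ (-(s * k)) * eLpNorm ((dyadicShell k).indicator φ) 2 volume ≤
      2 ^ s * weightedL2 (-s) ((dyadicShell k).indicator φ) := by
  have hle := weightedL2_indicator_le_mul (α := 0) (S := dyadicShell k) (fun ξ hξ ↦ by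
    simpa using one_le_mul_abs_rpow_neg_of_mem_dyadicShell hs hξ) φ
  rw [weightedL2_zero, ← ENNReal.ofReal_rpow_of_pos two_pos, ENNReal.ofReal_ofNat] at hle
  calc _ ≤ _ := mul_le_mul_right hle _
    _ = _ := by
        rw [← mul_assoc, ← ENNReal.rpow_add _ _ two_ne_zero ENNReal.ofNat_ne_top]
        ring_nf

end Dyadic

/-! ### The estimate on a shell and for pairs of shells -/

section Shell

variable {φ : ℝ → ℂ} {s : ℝ}

lemma eLpNorm'_iSup_enorm_airyExtension_four_le (hφ : Integrable φ) :
    eLpNorm' (fun t ↦ ⨆ x, ‖airyExtension φ t x‖ₑ) 4 volume ≤ 16 * weightedL2 (-(1 / 4)) φ :=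
  calc _ ≤ ((16 * weightedL2 (-(1 / 4)) φ) ^ (4 : ℝ)) ^ (1 / 4 : ℝ) :=
        ENNReal.rpow_le_rpow (lintegral_iSup_enorm_airyExtension_pow_four_le hφ) (by norm_num)
    _ = 16 * weightedL2 (-(1 / 4)) φ := by
        rw [← ENNReal.rpow_mul]
        norm_num

lemma mixedNorm_airyExtension_le_rpow_mul_rpow (hφ : Integrable φ) (hs₀ : 0 < s)
    (hs₁ : s < 1 / 4) :
    mixedNorm s⁻¹ (1 / 2 - 2 * s)⁻¹ volume volume (airyExtension φ) ≤
      16 * (eLpNorm φ 2 volume ^ (1 - 4 * s) * weightedL2 (-(1 / 4)) φ ^ (4 * s)) := by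
  have hθ : 0 < 1 - 4 * s := by linarith
  have henergy (t : ℝ) : eLpNorm' (fun x ↦ ‖airyExtension φ t x‖ₑ)
      ((1 - 4 * s) * (1 / 2 - 2 * s)⁻¹) volume ≤ 16 * eLpNorm φ 2 volume := by
    have htwo : (1 - 4 * s) * (1 / 2 - 2 * s)⁻¹ = (2 : ℝ≥0∞).toReal := by
      rw [ENNReal.toReal_ofNat, show 1 - 4 * s = 2 * (1 / 2 - 2 * s) by ring,
        mul_inv_cancel_right₀ (by linarith)]
    rw [htwo, ← eLpNorm_eq_eLpNorm' two_ne_zero ENNReal.ofNat_ne_top, eLpNorm_enorm]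
    refine (eLpNorm_airyExtension_two_le hφ t).trans (mul_le_mul_left ?_ _)
    rw [← ENNReal.ofReal_ofNat 16]
    exact ENNReal.ofReal_le_ofReal (by linarith [Real.pi_lt_four])
  have hinterp := mixedNorm_le_rpow_mul_rpow (μ := volume) (inv_pos.2 hs₀)
    (inv_pos.2 (by linarith : 0 < 1 / 2 - 2 * s)) hθ (by linarith)
    (fun t ↦ (measurable_enorm_airyExtension hφ).of_uncurry_left.aemeasurable) henergy
    (measurable_iSup_enorm_airyExtension hφ)
    fun t x ↦ le_iSup (fun x ↦ ‖airyExtension φ t x‖ₑ) x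
  rw [sub_sub_cancel, mul_inv_cancel_right₀ hs₀.ne'] at hinterp
  calc _ = _ := mixedNorm_enorm _
    _ ≤ (16 * eLpNorm φ 2 volume) ^ (1 - 4 * s) *
          (16 * weightedL2 (-(1 / 4)) φ) ^ (4 * s) := by
        refine hinterp.trans ?_
        gcongr
        exact eLpNorm'_iSup_enorm_airyExtension_four_le hφ
    _ = _ := by
        rw [ENNReal.mul_rpow_of_nonneg _ _ hθ.le, ENNReal.mul_rpow_of_nonneg _ _ (by positivity),
          mul_mul_mul_comm, ← ENNReal.rpow_add_of_nonneg _ _ hθ.le (by positivity),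
          sub_add_cancel, ENNReal.rpow_one]

lemma mixedNorm_airyExtension_indicator_dyadicShell_le (hφ : Integrable φ) (hs₀ : 0 < s)
    (hs₁ : s < 1 / 4) (k : ℤ) :
    mixedNorm s⁻¹ (1 / 2 - 2 * s)⁻¹ volume volume (airyExtension ((dyadicShell k).indicator φ)) ≤
      16 * (2 ^ (-(s * k)) * eLpNorm ((dyadicShell k).indicator φ) 2 volume) := by
  set A := eLpNorm ((dyadicShell k).indicator φ) 2 volume
  calc _ ≤ 16 * (A ^ (1 - 4 * s) *
          weightedL2 (-(1 / 4)) ((dyadicShell k).indicator φ) ^ (4 * s)) :=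
        mixedNorm_airyExtension_le_rpow_mul_rpow (hφ.indicator (measurableSet_dyadicShell k))
          hs₀ hs₁
    _ ≤ 16 * (A ^ (1 - 4 * s) * (2 ^ (-(1 / 4 * k) : ℝ) * A) ^ (4 * s)) := by
        gcongr
        exact weightedL2_neg_indicator_dyadicShell_le (by norm_num) k φ
    _ = 16 * (2 ^ (-(s * k)) * (A ^ (1 - 4 * s) * A ^ (4 * s))) := by
        rw [ENNReal.mul_rpow_of_nonneg (2 ^ _) _ (by positivity), ← ENNReal.rpow_mul]
        ring_nf
    _ = _ := by
        rw [← ENNReal.rpow_add_of_nonneg _ _ (by linarith) (by positivity), sub_add_cancel,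
          ENNReal.rpow_one]

end Shell

section ShellPair

variable {φ : ℝ → ℂ} {s : ℝ}

lemma mixedNorm_mul_indicator_dyadicShell_le {s₁ s₂ : ℝ} (hφ : Integrable φ) (h₁ : 0 < s₁)
    (h₁' : s₁ < 1 / 4) (h₂ : 0 < s₂) (h₂' : s₂ < 1 / 4) (k j : ℤ) :
    mixedNorm (s₁ + s₂)⁻¹ (1 - 2 * (s₁ + s₂))⁻¹ volume volume
        (fun t x ↦ ‖airyExtension ((dyadicShell k).indicator φ) t x‖ₑ *
          ‖airyExtension ((dyadicShell j).indicator φ) t x‖ₑ) ≤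
      16 * (2 ^ (-(s₁ * k)) * eLpNorm ((dyadicShell k).indicator φ) 2 volume) *
        (16 * (2 ^ (-(s₂ * j)) * eLpNorm ((dyadicShell j).indicator φ) 2 volume)) := by
  have hmeas (i : ℤ) :
      Measurable (Function.uncurry fun t x ↦ ‖airyExtension ((dyadicShell i).indicator φ) t x‖ₑ) :=
    measurable_enorm_airyExtension (hφ.indicator (measurableSet_dyadicShell i))
  have hholder := mixedNorm_mul_le (μ := volume) (ν := volume)
    (p := (s₁ + s₂)⁻¹) (p₁ := s₁⁻¹) (p₂ := s₂⁻¹) (q := (1 - 2 * (s₁ + s₂))⁻¹)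
    (q₁ := (1 / 2 - 2 * s₁)⁻¹) (q₂ := (1 / 2 - 2 * s₂)⁻¹) (inv_pos.2 (by linarith))
    (inv_strictAnti₀ h₁ (by linarith)) (by simp only [one_div, inv_inv])
    (inv_pos.2 (by linarith)) (inv_strictAnti₀ (by linarith) (by linarith))
    (by simp only [one_div, inv_inv]; ring) (hmeas k) (hmeas j)
  refine hholder.trans ?_
  rw [← mixedNorm_enorm, ← mixedNorm_enorm]
  gcongr
  · exact mixedNorm_airyExtension_indicator_dyadicShell_le hφ h₁ h₁' k
  · exact mixedNorm_airyExtension_indicator_dyadicShell_le hφ h₂ h₂' j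

-- Moving a little of the smoothing from one factor to the other gains decay in `|k - j|`.
lemma mixedNorm_mul_indicator_dyadicShell_le_decay {δ : ℝ} (hφ : Integrable φ) (hδ : 0 ≤ δ)
    (hδs : δ < s) (hδs' : s + δ < 1 / 4) (k j : ℤ) :
    mixedNorm (2 * s)⁻¹ (1 - 4 * s)⁻¹ volume volume
        (fun t x ↦ ‖airyExtension ((dyadicShell k).indicator φ) t x‖ₑ *
          ‖airyExtension ((dyadicShell j).indicator φ) t x‖ₑ) ≤
      16 ^ 2 * (2 ^ (-(δ * |((k - j : ℤ) : ℝ)|)) *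
        (2 ^ (-(s * k)) * eLpNorm ((dyadicShell k).indicator φ) 2 volume *
          (2 ^ (-(s * j)) * eLpNorm ((dyadicShell j).indicator φ) 2 volume))) := by
  obtain ⟨η, hη, hηkj⟩ : ∃ η : ℝ, |η| = δ ∧ η * (k - j : ℤ) = δ * |((k - j : ℤ) : ℝ)| := by
    rcases abs_cases ((k - j : ℤ) : ℝ) with ⟨habs, -⟩ | ⟨habs, -⟩
    · exact ⟨δ, abs_of_nonneg hδ, by rw [habs]⟩
    · exact ⟨-δ, by rw [abs_neg, abs_of_nonneg hδ], by rw [habs, neg_mul_comm]⟩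
  obtain ⟨hη₁, hη₂⟩ := abs_le.1 hη.le
  have hpair := mixedNorm_mul_indicator_dyadicShell_le (s₁ := s + η) (s₂ := s - η) hφ
    (by linarith) (by linarith) (by linarith) (by linarith) k j
  have hweight : (2 : ℝ≥0∞) ^ (-((s + η) * k)) * 2 ^ (-((s - η) * j)) =
      2 ^ (-(δ * |((k - j : ℤ) : ℝ)|)) * (2 ^ (-(s * k)) * 2 ^ (-(s * j))) := by
    simp only [← ENNReal.rpow_add _ _ two_ne_zero ENNReal.ofNat_ne_top, ← hηkj]
    push_cast
    ring_nf
  rw [show s + η + (s - η) = 2 * s by ring, show 1 - 2 * (2 * s) = 1 - 4 * s by ring] at hpair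
  refine hpair.trans_eq ?_
  set A := eLpNorm ((dyadicShell k).indicator φ) 2 volume
  set B := eLpNorm ((dyadicShell j).indicator φ) 2 volume
  calc _ = 16 ^ 2 * (2 ^ (-((s + η) * k)) * 2 ^ (-((s - η) * j)) * (A * B)) := by ring
    _ = _ := by
        rw [hweight]
        ring

end ShellPair

/-! ### Summation over pairs of shells -/

lemma tsum_sq_eq_tsum_prod {ι : Type*} (f : ι → ℝ≥0∞) :
    (∑' i, f i) ^ 2 = ∑' z : ι × ι, f z.1 * f z.2 := by
  rw [ENNReal.tsum_prod (f := fun i j ↦ f i * f j), sq]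
  simp only [ENNReal.tsum_mul_left, ENNReal.tsum_mul_right]

lemma tsum_sub_mul_mul_le {G : Type*} [AddCommGroup G] (w c : G → ℝ≥0∞) :
    ∑' z : G × G, w (z.1 - z.2) * (c z.1 * c z.2) ≤ 2 * (∑' n, w n) * ∑' k, c k ^ 2 := by
  have hmul (a b : ℝ≥0∞) : a * b ≤ a ^ 2 + b ^ 2 := by
    rcases le_total a b with h | h
    · exact (mul_le_mul_left h b).trans (by rw [← sq]; exact le_add_self)
    · exact (mul_le_mul_right h a).trans (by rw [← sq]; exact le_self_add)
  have hleft (k : G) : ∑' j, w (k - j) = ∑' n, w n := (Equiv.subLeft k).tsum_eq w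
  have hright (j : G) : ∑' k, w (k - j) = ∑' n, w n := (Equiv.subRight j).tsum_eq w
  calc ∑' z : G × G, w (z.1 - z.2) * (c z.1 * c z.2)
      ≤ ∑' z : G × G, (w (z.1 - z.2) * c z.1 ^ 2 + w (z.1 - z.2) * c z.2 ^ 2) := by
        refine ENNReal.tsum_le_tsum fun z ↦ ?_
        rw [← mul_add]
        gcongr
        exact hmul _ _
    _ = ∑' k, (∑' j, w (k - j)) * c k ^ 2 + ∑' j, (∑' k, w (k - j)) * c j ^ 2 := by
        rw [ENNReal.tsum_add, ENNReal.tsum_prod (f := fun k j ↦ w (k - j) * c k ^ 2),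
          ENNReal.tsum_prod (f := fun k j ↦ w (k - j) * c j ^ 2),
          ENNReal.tsum_comm (f := fun k j ↦ w (k - j) * c j ^ 2)]
        simp only [ENNReal.tsum_mul_right]
    _ = _ := by
        simp only [hleft, hright, ENNReal.tsum_mul_left]
        ring

lemma tsum_two_rpow_neg_mul_abs_ne_top {δ : ℝ} (hδ : 0 < δ) :
    ∑' n : ℤ, (2 : ℝ≥0∞) ^ (-(δ * |(n : ℝ)|)) ≠ ⊤ := by
  have hgeom : Summable fun n : ℕ ↦ (2 : ℝ) ^ (-(δ * n)) := by
    simp only [← neg_mul, Real.rpow_mul_natCast two_pos.le]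
    exact summable_geometric_of_lt_one (by positivity)
      (Real.rpow_lt_one_of_one_lt_of_neg one_lt_two (neg_neg_of_pos hδ))
  have hsum : Summable fun n : ℤ ↦ (2 : ℝ) ^ (-(δ * |(n : ℝ)|)) :=
    .of_nat_of_neg (by simpa using hgeom) (by simpa using hgeom)
  convert hsum.tsum_ofReal_ne_top with n
  rw [← ENNReal.ofReal_rpow_of_pos two_pos, ENNReal.ofReal_ofNat]

section Mixed

variable {φ : ℝ → ℂ} {s : ℝ}

lemma sq_mixedNorm_airyExtension_le_tsum (hφ : Integrable φ) (hs₀ : 0 < s) (hs₁ : s < 1 / 4) :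
    mixedNorm s⁻¹ (1 / 2 - 2 * s)⁻¹ volume volume (airyExtension φ) ^ 2 ≤
      ∑' z : ℤ × ℤ, mixedNorm (2 * s)⁻¹ (1 - 4 * s)⁻¹ volume volume fun t x ↦
        ‖airyExtension ((dyadicShell z.1).indicator φ) t x‖ₑ *
          ‖airyExtension ((dyadicShell z.2).indicator φ) t x‖ₑ := by
  have hmeas (k : ℤ) :
      Measurable (Function.uncurry fun t x ↦ ‖airyExtension ((dyadicShell k).indicator φ) t x‖ₑ) :=
    measurable_enorm_airyExtension (hφ.indicator (measurableSet_dyadicShell k))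
  have hp : s⁻¹ = (2 : ℕ) * (2 * s)⁻¹ := by field_simp; norm_num
  have hq : (1 / 2 - 2 * s)⁻¹ = (2 : ℕ) * (1 - 4 * s)⁻¹ := by
    rw [show 1 - 4 * s = 2 * (1 / 2 - 2 * s) by ring, mul_inv, Nat.cast_ofNat,
      mul_inv_cancel_left₀ two_ne_zero]
  have hp' : 1 ≤ (2 * s)⁻¹ := (one_le_inv₀ (by positivity)).2 (by linarith)
  have hq' : 1 ≤ (1 - 4 * s)⁻¹ := (one_le_inv₀ (by linarith)).2 (by linarith)
  rw [mixedNorm_enorm, hp, hq, ← mixedNorm_pow _ two_ne_zero]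
  calc _ ≤ mixedNorm (2 * s)⁻¹ (1 - 4 * s)⁻¹ volume volume fun t x ↦
          ∑' z : ℤ × ℤ, ‖airyExtension ((dyadicShell z.1).indicator φ) t x‖ₑ *
            ‖airyExtension ((dyadicShell z.2).indicator φ) t x‖ₑ := by
        refine mixedNorm_mono (by positivity) (by positivity) fun t x ↦ ?_
        rw [enorm_eq_self, enorm_eq_self, ← tsum_sq_eq_tsum_prod fun k ↦
          ‖airyExtension ((dyadicShell k).indicator φ) t x‖ₑ]
        gcongr
        exact enorm_airyExtension_le_tsum hφ t x
    _ ≤ _ := mixedNorm_tsum_le hp' hq' fun z ↦ (hmeas z.1).mul (hmeas z.2)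

lemma sq_mixedNorm_airyExtension_le {δ : ℝ} (hφ : Integrable φ) (hδ : 0 ≤ δ) (hδs : δ < s)
    (hδs' : s + δ < 1 / 4) :
    mixedNorm s⁻¹ (1 / 2 - 2 * s)⁻¹ volume volume (airyExtension φ) ^ 2 ≤
      16 ^ 2 * (2 * (∑' n : ℤ, 2 ^ (-(δ * |(n : ℝ)|))) * (2 ^ s) ^ 2) * weightedL2 (-s) φ ^ 2 := by
  have hs₀ : 0 < s := hδ.trans_lt hδs
  set c : ℤ → ℝ≥0∞ := fun k ↦ 2 ^ (-(s * k)) * eLpNorm ((dyadicShell k).indicator φ) 2 volume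
  set w : ℤ → ℝ≥0∞ := fun n ↦ 2 ^ (-(δ * |(n : ℝ)|))
  calc _ ≤ ∑' z : ℤ × ℤ, 16 ^ 2 * (w (z.1 - z.2) * (c z.1 * c z.2)) :=
        (sq_mixedNorm_airyExtension_le_tsum hφ hs₀ (by linarith)).trans <|
          ENNReal.tsum_le_tsum fun z ↦
            mixedNorm_mul_indicator_dyadicShell_le_decay hφ hδ hδs hδs' z.1 z.2
    _ ≤ 16 ^ 2 * (2 * (∑' n, w n) * ∑' k, c k ^ 2) := by
        rw [ENNReal.tsum_mul_left]
        gcongr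
        exact tsum_sub_mul_mul_le w c
    _ ≤ 16 ^ 2 * (2 * (∑' n, w n) *
          ∑' k, (2 ^ s * weightedL2 (-s) ((dyadicShell k).indicator φ)) ^ 2) := by
        gcongr with k
        exact two_rpow_mul_eLpNorm_indicator_dyadicShell_le hs₀.le k φ
    _ = _ := by
        simp only [mul_pow, ENNReal.tsum_mul_left, tsum_weightedL2_indicator_dyadicShell_sq]
        ring

end Mixed

theorem exists_mixedNorm_airyExtension_le {s : ℝ} (hs₀ : 0 < s) (hs₁ : s < 1 / 4) :
    ∃ C : ℝ≥0, ∀ φ : ℝ → ℂ, Integrable φ →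
      mixedNorm s⁻¹ (1 / 2 - 2 * s)⁻¹ volume volume (airyExtension φ) ≤
        C * weightedL2 (-s) φ := by
  obtain ⟨δ, hδ, hδs⟩ := exists_between (lt_min hs₀ (sub_pos.2 hs₁))
  obtain ⟨hδs, hδs'⟩ := lt_min_iff.1 hδs
  have hsum := tsum_two_rpow_neg_mul_abs_ne_top hδ
  set K := 16 ^ 2 * (2 * (∑' n : ℤ, (2 : ℝ≥0∞) ^ (-(δ * |(n : ℝ)|))) * (2 ^ s) ^ 2)
  have hK : K ≠ ⊤ := by finiteness
  refine ⟨NNReal.sqrt K.toNNReal, fun φ hφ ↦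
    (ENNReal.pow_right_strictMono two_ne_zero).le_iff_le.1 ?_⟩
  rw [mul_pow, ← ENNReal.coe_pow, NNReal.sq_sqrt, ENNReal.coe_toNNReal hK]
  exact sq_mixedNorm_airyExtension_le hφ hδ.le hδs (by linarith)

/-! ### Admissible exponents -/

lemma LqtLrx_le (q r : ℝ≥0∞) (u : ℝ → ℝ → ℂ) :
    LqtLrx q r u ≤ eLpNorm (fun t ↦ eLpNorm (u t) r volume) q volume :=
  eLpNorm_mono_enorm fun t ↦ by
    rw [Real.enorm_eq_ofReal ENNReal.toReal_nonneg]
    exact ENNReal.ofReal_toReal_le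

lemma LqtLrx_const_smul (q r : ℝ≥0∞) (c : ℝ) (u : ℝ → ℝ → ℂ) :
    LqtLrx q r (fun t x ↦ c • u t x) = ‖c‖ₑ * LqtLrx q r u := by
  have hslice (t : ℝ) : (eLpNorm (fun x ↦ c • u t x) r volume).toReal =
      ‖c‖ • (eLpNorm (u t) r volume).toReal := by
    rw [← toReal_enorm, smul_eq_mul, ← ENNReal.toReal_mul]
    exact congrArg _ (eLpNorm_const_smul c (u t) r volume)
  simp only [LqtLrx, hslice]
  rw [← enorm_norm c]
  exact eLpNorm_const_smul ‖c‖ (fun t ↦ (eLpNorm (u t) r volume).toReal) q volume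

lemma LqtLrx_ofReal_le {p q : ℝ} (hp : 0 < p) (hq : 0 < q) (u : ℝ → ℝ → ℂ) :
    LqtLrx (ENNReal.ofReal p) (ENNReal.ofReal q) u ≤ mixedNorm p q volume volume u := by
  refine (LqtLrx_le _ _ u).trans_eq ?_
  simp only [mixedNorm, eLpNorm_eq_eLpNorm' (ENNReal.ofReal_pos.2 hp).ne' ENNReal.ofReal_ne_top,
    eLpNorm_eq_eLpNorm' (ENNReal.ofReal_pos.2 hq).ne' ENNReal.ofReal_ne_top,
    ENNReal.toReal_ofReal hp.le, ENNReal.toReal_ofReal hq.le]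

lemma LqtLrx_top_two_airyExtension_le {φ : ℝ → ℂ} (hφ : Integrable φ) :
    LqtLrx ⊤ 2 (airyExtension φ) ≤ ENNReal.ofReal (2 * Real.pi) * weightedL2 0 φ := by
  refine (LqtLrx_le _ _ _).trans ?_
  rw [eLpNorm_exponent_top, weightedL2_zero]
  exact eLpNormEssSup_le_of_ae_enorm_bound (.of_forall fun t ↦ eLpNorm_airyExtension_two_le hφ t)

lemma LqtLrx_four_top_airyExtension_le {φ : ℝ → ℂ} (hφ : Integrable φ) :
    LqtLrx 4 ⊤ (airyExtension φ) ≤ 16 * weightedL2 (-(1 / 4)) φ :=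
  calc _ ≤ eLpNorm (fun t ↦ ⨆ x, ‖airyExtension φ t x‖ₑ) 4 volume :=
        (LqtLrx_le _ _ _).trans <| eLpNorm_mono_enorm fun t ↦ by
          rw [eLpNorm_exponent_top]
          exact eLpNormEssSup_le_of_ae_enorm_bound
            (.of_forall fun x ↦ le_iSup (fun x ↦ ‖airyExtension φ t x‖ₑ) x)
    _ ≤ _ := by
        rw [eLpNorm_eq_eLpNorm' four_ne_zero ENNReal.ofNat_ne_top, ENNReal.toReal_ofNat]
        exact eLpNorm'_iSup_enorm_airyExtension_four_le hφ

lemma strichartz_exponent_cases {q r : ℝ≥0∞} (hqr : 2 / q + 1 / r = 1 / 2) (hq : 4 ≤ q) :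
    (q = ⊤ ∧ r = 2) ∨ (q = 4 ∧ r = ⊤) ∨ ∃ s : ℝ, 0 < s ∧ s < 1 / 4 ∧
      q = ENNReal.ofReal s⁻¹ ∧ r = ENNReal.ofReal (1 / 2 - 2 * s)⁻¹ := by
  obtain rfl | hq_top := eq_or_ne q ⊤
  · exact .inl ⟨rfl, by simpa using hqr⟩
  have hq₀ : 0 < q.toReal :=
    ENNReal.toReal_pos (zero_lt_four.trans_le hq).ne' hq_top
  set s := q.toReal⁻¹
  have hs₀ : 0 < s := inv_pos.2 hq₀
  have hs₁ : s ≤ 1 / 4 := by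
    rw [one_div]
    exact inv_anti₀ four_pos (by simpa using ENNReal.toReal_mono hq_top hq)
  have hq_eq : q = ENNReal.ofReal s⁻¹ := by rw [inv_inv, ENNReal.ofReal_toReal hq_top]
  have hr_inv : r⁻¹ = ENNReal.ofReal (1 / 2 - 2 * s) := by
    rw [ENNReal.ofReal_sub _ (by positivity)]
    refine ENNReal.eq_sub_of_add_eq ENNReal.ofReal_ne_top ?_
    convert hqr using 1
    · rw [hq_eq, ENNReal.ofReal_inv_of_pos hs₀, ENNReal.ofReal_mul two_pos.le,
        ENNReal.ofReal_ofNat, ENNReal.div_eq_inv_mul, inv_inv, one_div, mul_comm, add_comm]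
    · rw [ENNReal.ofReal_div_of_pos two_pos, ENNReal.ofReal_one, ENNReal.ofReal_ofNat]
  obtain hs₁ | hs₁ := hs₁.lt_or_eq
  · refine .inr (.inr ⟨s, hs₀, hs₁, hq_eq, ?_⟩)
    rw [ENNReal.ofReal_inv_of_pos (by linarith), ← hr_inv, inv_inv]
  · refine .inr (.inl ⟨?_, ?_⟩)
    · rw [hq_eq, hs₁, one_div, inv_inv, ENNReal.ofReal_ofNat]
    · rw [← ENNReal.inv_eq_zero, hr_inv, hs₁]
      norm_num

theorem exists_LqtLrx_airyExtension_le {q r : ℝ≥0∞} (hqr : 2 / q + 1 / r = 1 / 2) (hq : 4 ≤ q) :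
    ∃ C : ℝ≥0, ∀ φ : ℝ → ℂ, Integrable φ →
      LqtLrx q r (airyExtension φ) ≤ C * weightedL2 (-(1 / q).toReal) φ := by
  rcases strichartz_exponent_cases hqr hq with
    ⟨rfl, rfl⟩ | ⟨rfl, rfl⟩ | ⟨s, hs₀, hs₁, rfl, rfl⟩
  · exact ⟨(2 * Real.pi).toNNReal, fun φ hφ ↦ by
      rw [one_div, ENNReal.inv_top, ENNReal.toReal_zero, neg_zero]
      exact LqtLrx_top_two_airyExtension_le hφ⟩
  · exact ⟨16, fun φ hφ ↦ by simpa using LqtLrx_four_top_airyExtension_le hφ⟩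
  · obtain ⟨C, hC⟩ := exists_mixedNorm_airyExtension_le hs₀ hs₁
    have hα : (1 / ENNReal.ofReal s⁻¹).toReal = s := by
      rw [one_div, ENNReal.toReal_inv, ENNReal.toReal_ofReal (inv_pos.2 hs₀).le, inv_inv]
    rw [hα]
    exact ⟨C, fun φ hφ ↦ (LqtLrx_ofReal_le (inv_pos.2 hs₀) (inv_pos.2 (by linarith)) _).trans
      (hC φ hφ)⟩

/-! ### Returning to the initial data -/

lemma integrable_abs_rpow_smul {E : Type*} [NormedAddCommGroup E] [NormedSpace ℝ E] {g : ℝ → E}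
    (hg : Integrable g) {M : ℝ} (hM : ∀ ξ, ‖g ξ‖ ≤ M) {β : ℝ} (hβ : -1 < β) (hβ₀ : β ≤ 0) :
    Integrable fun ξ ↦ |ξ| ^ β • g ξ := by
  have hmeas : AEStronglyMeasurable fun ξ : ℝ ↦ |ξ| ^ β • g ξ :=
    (by fun_prop : Measurable fun ξ : ℝ ↦ |ξ| ^ β).aestronglyMeasurable.smul hg.1
  have hnorm (ξ : ℝ) : ‖|ξ| ^ β • g ξ‖ = |ξ| ^ β * ‖g ξ‖ := by
    rw [norm_smul, Real.norm_of_nonneg (by positivity)]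
  rw [← integrableOn_univ, ← union_compl_self (Metric.ball (0 : ℝ) 1), integrableOn_union]
  constructor
  · refine integrableOn_ball_of_norm_le_rpow (C := M) (α := -β) (by simp)
      (by simpa using neg_lt.1 hβ)
      (.of_forall fun ξ ↦ ?_) hmeas
    rw [hnorm, neg_neg, Real.norm_eq_abs, mul_comm]
    gcongr
    exact hM ξ
  · refine hg.norm.integrableOn.mono' hmeas.restrict ?_
    filter_upwards [ae_restrict_mem measurableSet_ball.compl] with ξ hξ
    rw [hnorm]
    exact mul_le_of_le_one_left (norm_nonneg _)
      (Real.rpow_le_one_of_one_le_of_nonpos (by simpa using hξ) hβ₀)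

lemma memLp_two_abs_rpow_smul {E : Type*} [NormedAddCommGroup E] [NormedSpace ℝ E] {g : ℝ → E}
    (hg : Integrable g) {M : ℝ} (hM : ∀ ξ, ‖g ξ‖ ≤ M) {α : ℝ} (hα : -(1 / 2) < α) (hα₀ : α ≤ 0) :
    MemLp (fun ξ ↦ |ξ| ^ α • g ξ) 2 := by
  have hmeas := (integrable_abs_rpow_smul hg hM (by linarith) hα₀).1
  have hM' (ξ : ℝ) : ‖‖g ξ‖ ^ 2‖ ≤ M ^ 2 := by
    rw [norm_pow, norm_norm]
    gcongr
    exact hM ξ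
  have hg2 : Integrable fun ξ ↦ ‖g ξ‖ ^ 2 := by
    simpa only [sq] using hg.norm.bdd_mul hg.norm.1 (.of_forall fun ξ ↦ by simpa using hM ξ)
  rw [memLp_two_iff_integrable_sq_norm hmeas]
  convert integrable_abs_rpow_smul hg2 hM' (β := α * (2 : ℕ)) (by push_cast; linarith)
    (by push_cast; linarith) using 2 with ξ
  rw [norm_smul, mul_pow, Real.norm_of_nonneg (by positivity), smul_eq_mul,
    Real.rpow_mul_natCast (abs_nonneg _)]

lemma L2x_absD {u₀ : ℝ → ℂ} (hu : Integrable (ftx u₀)) {α : ℝ} (hα : -(1 / 2) < α) (hα₀ : α ≤ 0) :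
    L2x (absD α u₀) =
      ENNReal.ofReal ((2 * Real.pi) ^ (-(1 / 2) : ℝ)) * weightedL2 α (ftx u₀) := by
  have h1 := integrable_abs_rpow_smul hu (norm_ftx_le u₀) (by linarith) hα₀
  have h2 := memLp_two_abs_rpow_smul hu (norm_ftx_le u₀) hα hα₀
  simp only [Complex.real_smul] at h1 h2
  exact eLpNorm_iftx h1 h2

theorem LqtLrx_airySol_le {q r : ℝ≥0∞} {α : ℝ} (hα : -(1 / 2) < α) (hα₀ : α ≤ 0) {C : ℝ≥0}
    {u₀ : ℝ → ℂ} (hu : Integrable (ftx u₀))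
    (hC : LqtLrx q r (airyExtension (ftx u₀)) ≤ C * weightedL2 α (ftx u₀)) :
    LqtLrx q r (airySol u₀) ≤ C * L2x (absD α u₀) := by
  have hpi : 1 ≤ 2 * Real.pi := by linarith [Real.pi_gt_three]
  calc LqtLrx q r (airySol u₀) =
        ENNReal.ofReal ((2 * Real.pi) ^ (-1 : ℝ)) * LqtLrx q r (airyExtension (ftx u₀)) := by
        rw [funext₂ (airySol_eq u₀), LqtLrx_const_smul, Real.enorm_eq_ofReal (by positivity),
          Real.rpow_neg_one]
    _ ≤ ENNReal.ofReal ((2 * Real.pi) ^ (-(1 / 2) : ℝ)) * (C * weightedL2 α (ftx u₀)) := by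
        gcongr
        norm_num
    _ = C * L2x (absD α u₀) := by rw [L2x_absD hu hα hα₀, mul_left_comm]

/-- Strichartz estimates for the Airy equation.
Let `(q,r)` be a Strichartz pair, i.e. `2/q + 1/r = 1/2` with `4 ≤ q ≤ ∞`. Then
every solution of the Airy equation with initial data `u₀` satisfies
`‖u‖_{L^q_t L^r_x} ≲ ‖|D|^{-1/q} u₀‖_{L²}`. -/
theorem airy_strichartz (q r : ℝ≥0∞) (hqr : 2 / q + 1 / r = 1 / 2) (hq : 4 ≤ q) :
    ∃ C : ℝ, 0 < C ∧ ∀ u₀ : ℝ → ℂ,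
      LqtLrx q r (airySol u₀) ≤
        ENNReal.ofReal C * L2x (absD (-(1 / q).toReal) u₀) := by
  obtain ⟨C, hC⟩ := exists_LqtLrx_airyExtension_le hqr hq
  have hα : (1 / q).toReal ≤ 1 / 4 := by
    simpa using ENNReal.toReal_mono (by simp) (ENNReal.inv_le_inv.2 hq)
  refine ⟨C + 1, by positivity, fun u₀ ↦ ?_⟩
  by_cases hu : Integrable (ftx u₀)
  · calc LqtLrx q r (airySol u₀) ≤ C * L2x (absD (-(1 / q).toReal) u₀) :=
          LqtLrx_airySol_le (by linarith) (neg_nonpos.2 ENNReal.toReal_nonneg) hu (hC _ hu)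
      _ ≤ _ := by
          gcongr
          rw [← ENNReal.ofReal_coe_nnreal]
          exact ENNReal.ofReal_le_ofReal (by linarith)
  · rw [airySol_of_not_integrable hu]
    simp [LqtLrx]

end KdVPaper
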